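/- arXiv:2502.11871 — 3 statements merged into one kernel-verified Lean document; each statement's English description precedes it below -/
import Mathlib

section
/- Let Re(α) > 0, Re(β) > 0, Re(γ) > 0 and a ∈ ℝ. Then the Riemann-Liouville fractional derivative of order α based at 0 satisfies, for t > 0, D^α_{0,t} ( t^{γ−1} E_{β,γ}(a t^β) ) = t^{γ−α−1} E_{β,γ−α}(a t^β). -/
/-- The two-parameter Mittag-Leffler function `E_{α,β}(z) = ∑_{k=0}^∞ z^k / Γ(αk + β)`. -/
noncomputable def mittagLeffler (α β z : ℂ) : ℂ :=
  ∑' k : ℕ, z ^ k / Complex.Gamma (α * k + β)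

/-- The Riemann-Liouville fractional integral of order `α` based at `a`:
`I^α_{a,x} f(x) = (1/Γ(α)) ∫_a^x f(s) (x−s)^{α−1} ds`. -/
noncomputable def rlIntegral (a : ℝ) (α : ℂ) (f : ℝ → ℂ) (x : ℝ) : ℂ :=
  (1 / Complex.Gamma α) * ∫ s in a..x, f s * ((x - s : ℝ) : ℂ) ^ (α - 1)

/-- The Riemann-Liouville fractional derivative of order `α`, with `n = ⌊Re(α)⌋ + 1`:
`D^α_{a,x} y(x) = (d^n/dx^n) I^{n−α}_{a,x} y(x)`. -/
noncomputable def rlDeriv (a : ℝ) (α : ℂ) (f : ℝ → ℂ) (x : ℝ) : ℂ :=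
  iteratedDeriv (⌊α.re⌋ + 1).toNat
    (rlIntegral a ((((⌊α.re⌋ + 1).toNat : ℕ) : ℂ) - α) f) x

open Filter Topology MeasureTheory

/-- The Beta integral `B(βk + γ, β)` tends to `0` as `k → ∞`. -/
lemma tendsto_betaIntegral_natCast_atTop {β : ℂ} (hβ : 0 < β.re) (γ : ℂ) :
    Tendsto (fun k : ℕ => Complex.betaIntegral (β * k + γ) β) atTop (𝓝 0) := by
  have hre : Tendsto (fun k : ℕ => β.re * k + (γ.re - 1)) atTop atTop :=
    tendsto_atTop_add_const_right _ _ (tendsto_natCast_atTop_atTop.const_mul_atTop hβ)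
  have key : ∀ x : ℝ, 0 < x → ∀ k : ℕ,
      ‖(x : ℂ) ^ (β * k + γ - 1) * (1 - (x : ℂ)) ^ (β - 1)‖
        = x ^ (β.re * k + (γ.re - 1)) * ‖(1 - (x : ℂ)) ^ (β - 1)‖ := by
    intro x hx k
    rw [norm_mul, Complex.norm_cpow_eq_rpow_re_of_pos hx]
    congr 2
    simp
    ring
  have := intervalIntegral.tendsto_integral_filter_of_dominated_convergence
    (F := fun (k : ℕ) (x : ℝ) => (x : ℂ) ^ (β * k + γ - 1) * (1 - (x : ℂ)) ^ (β - 1))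
    (f := fun _ => (0 : ℂ)) (μ := volume) (a := 0) (b := 1) (l := atTop)
    (fun x : ℝ => ‖(x : ℂ) ^ ((1 : ℂ) - 1) * (1 - (x : ℂ)) ^ (β - 1)‖)
    (Eventually.of_forall fun k => by
      refine Measurable.aestronglyMeasurable ?_
      fun_prop)
    (by
      filter_upwards [hre.eventually_ge_atTop 0] with k hk
      refine Eventually.of_forall fun x hx => ?_
      rw [Set.uIoc_of_le zero_le_one] at hx
      rw [key x hx.1 k, sub_self, Complex.cpow_zero, one_mul]
      exact mul_le_of_le_one_left (norm_nonneg _) (Real.rpow_le_one hx.1.le hx.2 hk))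
    (Complex.betaIntegral_convergent (by simp) hβ).norm
    (by
      have h1 : ∀ᵐ x : ℝ, x ≠ 1 := by simp [ae_iff, measure_singleton]
      filter_upwards [h1] with x hx1 hx
      rw [Set.uIoc_of_le zero_le_one] at hx
      refine tendsto_zero_iff_norm_tendsto_zero.2 ?_
      simp_rw [key x hx.1]
      simpa using ((tendsto_rpow_atTop_of_base_lt_one x (by linarith [hx.1])
        (lt_of_le_of_ne hx.2 hx1)).comp hre).mul_const ‖(1 - (x : ℂ)) ^ (β - 1)‖)
  simpa [Complex.betaIntegral] using this

/-- The Mittag-Leffler series converges absolutely everywhere. -/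
lemma summable_norm_mittagLeffler {β : ℂ} (hβ : 0 < β.re) (γ z : ℂ) :
    Summable (fun k : ℕ => ‖z ^ k / Complex.Gamma (β * k + γ)‖) := by
  have hre : Tendsto (fun k : ℕ => β.re * k + γ.re) atTop atTop :=
    tendsto_atTop_add_const_right _ _ (tendsto_natCast_atTop_atTop.const_mul_atTop hβ)
  have hlim : Tendsto
      (fun k : ℕ => ‖z * Complex.betaIntegral (β * k + γ) β / Complex.Gamma β‖) atTop (𝓝 0) := by
    simpa using
      (((tendsto_betaIntegral_natCast_atTop hβ γ).const_mul z).div_const (Complex.Gamma β)).norm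
  refine summable_of_ratio_norm_eventually_le (r := 1 / 2) (by norm_num) ?_
  filter_upwards [hre.eventually_gt_atTop 0, hlim.eventually_le_const (by norm_num : (0 : ℝ) < 1 / 2)]
    with k hk hle
  have hk' : 0 < (β * k + γ).re := by simpa using hk
  have hΓ := Complex.Gamma_mul_Gamma_eq_betaIntegral hk' hβ
  have h1 := Complex.Gamma_ne_zero_of_re_pos hk'
  have h2 := Complex.Gamma_ne_zero_of_re_pos hβ
  have h3 : Complex.Gamma (β * k + γ + β) ≠ 0 :=
    Complex.Gamma_ne_zero_of_re_pos (by rw [Complex.add_re]; positivity)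
  have heq : z ^ (k + 1) / Complex.Gamma (β * (k + 1 : ℕ) + γ)
      = z * Complex.betaIntegral (β * k + γ) β / Complex.Gamma β
        * (z ^ k / Complex.Gamma (β * k + γ)) := by
    rw [show β * (k + 1 : ℕ) + γ = β * k + γ + β by push_cast; ring]
    field_simp
    linear_combination z ^ (k + 1) * hΓ
  rw [norm_norm, norm_norm, heq, norm_mul]
  gcongr

lemma ofReal_cpow_mul_pow {t : ℝ} (ht : 0 < t) (β c : ℂ) (k : ℕ) :
    (t : ℂ) ^ c * ((t : ℂ) ^ β) ^ k = (t : ℂ) ^ (β * k + c) := by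
  rw [← Complex.cpow_mul_nat, ← Complex.cpow_add _ _ (by exact_mod_cast ht.ne'), add_comm]

lemma hasSum_cpow_mul_mittagLeffler {β : ℂ} (hβ : 0 < β.re) (γ a c : ℂ) {t : ℝ} (ht : 0 < t) :
    HasSum (fun k : ℕ => a ^ k / Complex.Gamma (β * k + γ) * (t : ℂ) ^ (β * k + c))
      ((t : ℂ) ^ c * mittagLeffler β γ (a * (t : ℂ) ^ β)) := by
  have := ((summable_norm_mittagLeffler hβ γ (a * (t : ℂ) ^ β)).of_norm.hasSum).mul_left
    ((t : ℂ) ^ c)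
  refine this.congr_fun ?_
  intro k
  rw [← ofReal_cpow_mul_pow ht, mul_pow]
  ring

/-- `d/dt (t^{γ-1} E_{β,γ}(a t^β)) = t^{γ-2} E_{β,γ-1}(a t^β)` for every complex `γ`. -/
lemma hasDerivAt_cpow_mul_mittagLeffler {β : ℂ} (hβ : 0 < β.re) (γ a : ℂ) {t : ℝ} (ht : 0 < t) :
    HasDerivAt (fun s : ℝ => (s : ℂ) ^ (γ - 1) * mittagLeffler β γ (a * (s : ℂ) ^ β))
      ((t : ℂ) ^ (γ - 1 - 1) * mittagLeffler β (γ - 1) (a * (t : ℂ) ^ β)) t := by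
  set M : ℝ := (t / 2) ^ (γ.re - 2) + (2 * t) ^ (γ.re - 2)
  have hmem : t ∈ Set.Ioo (t / 2) (2 * t) := ⟨by linarith, by linarith⟩
  have hpos : ∀ y ∈ Set.Ioo (t / 2) (2 * t), 0 < y := fun y hy => by linarith [hy.1]
  have hM : ∀ y ∈ Set.Ioo (t / 2) (2 * t), y ^ (γ.re - 2) ≤ M := by
    intro y hy
    rcases le_total 0 (γ.re - 2) with h | h
    · have := Real.rpow_le_rpow (hpos y hy).le hy.2.le h
      have : 0 ≤ (t / 2) ^ (γ.re - 2) := by positivity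
      simp only [M]; linarith
    · have := Real.rpow_le_rpow_of_nonpos (by positivity) hy.1.le h
      have : 0 ≤ (2 * t) ^ (γ.re - 2) := by positivity
      simp only [M]; linarith
  have hd := hasDerivAt_tsum_of_isPreconnected
    (u := fun k : ℕ => M * ‖(a * ((2 * t : ℝ) : ℂ) ^ β) ^ k / Complex.Gamma (β * k + (γ - 1))‖)
    (g := fun (k : ℕ) (s : ℝ) =>
      a ^ k / Complex.Gamma (β * k + γ) * (s : ℂ) ^ (β * k + (γ - 1)))
    (g' := fun (k : ℕ) (s : ℝ) =>
      a ^ k / Complex.Gamma (β * k + (γ - 1)) * (s : ℂ) ^ (β * k + (γ - 1 - 1)))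
    ((summable_norm_mittagLeffler hβ (γ - 1) (a * ((2 * t : ℝ) : ℂ) ^ β)).mul_left M)
    isOpen_Ioo isPreconnected_Ioo
    (fun k y hy => by
      have hslit : (y : ℂ) ∈ Complex.slitPlane := Complex.ofReal_mem_slitPlane.2 (hpos y hy)
      have h := (((hasDerivAt_id (y : ℂ)).cpow_const (c := β * k + (γ - 1)) hslit).const_mul
        (a ^ k / Complex.Gamma (β * k + γ))).comp_ofReal
      refine h.congr_deriv ?_
      rw [div_eq_mul_inv, div_eq_mul_inv,
        Complex.one_div_Gamma_eq_self_mul_one_div_Gamma_add_one (β * k + (γ - 1)),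
        show β * k + (γ - 1) + 1 = β * k + γ by ring,
        show β * k + (γ - 1 - 1) = β * k + (γ - 1) - 1 by ring]
      simp only [id]
      ring)
    (fun k y hy => by
      have hy0 := hpos y hy
      have hle : ‖(y : ℂ) ^ β‖ ≤ ‖((2 * t : ℝ) : ℂ) ^ β‖ := by
        rw [Complex.norm_cpow_eq_rpow_re_of_pos hy0,
          Complex.norm_cpow_eq_rpow_re_of_pos (by positivity)]
        exact Real.rpow_le_rpow hy0.le hy.2.le hβ.le
      have hc : ‖(y : ℂ) ^ (γ - 1 - 1)‖ ≤ M := by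
        rw [Complex.norm_cpow_eq_rpow_re_of_pos hy0]
        convert hM y hy using 2
        simp
        ring
      rw [← ofReal_cpow_mul_pow hy0, mul_pow, norm_mul, norm_mul, norm_div, norm_div, norm_mul,
        norm_pow, norm_pow, norm_pow]
      calc ‖a‖ ^ k / ‖Complex.Gamma (β * k + (γ - 1))‖
            * (‖(y : ℂ) ^ (γ - 1 - 1)‖ * ‖(y : ℂ) ^ β‖ ^ k)
          ≤ ‖a‖ ^ k / ‖Complex.Gamma (β * k + (γ - 1))‖
            * (M * ‖((2 * t : ℝ) : ℂ) ^ β‖ ^ k) := by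
            have : 0 ≤ M := (norm_nonneg _).trans hc
            gcongr
        _ = _ := by ring)
    hmem (hasSum_cpow_mul_mittagLeffler hβ γ a (γ - 1) ht).summable hmem
  rw [(hasSum_cpow_mul_mittagLeffler hβ (γ - 1) a (γ - 1 - 1) ht).tsum_eq] at hd
  refine hd.congr_of_eventuallyEq ?_
  filter_upwards [lt_mem_nhds ht] with s hs
  exact (hasSum_cpow_mul_mittagLeffler hβ γ a (γ - 1) hs).tsum_eq.symm

lemma iteratedDeriv_eqOn_cpow_mul_mittagLeffler {β : ℂ} (hβ : 0 < β.re) (γ a : ℂ) {f : ℝ → ℂ}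
    (hf : Set.EqOn f (fun s : ℝ => (s : ℂ) ^ (γ - 1) * mittagLeffler β γ (a * (s : ℂ) ^ β))
      (Set.Ioi 0)) (n : ℕ) :
    Set.EqOn (iteratedDeriv n f)
      (fun s : ℝ => (s : ℂ) ^ (γ - n - 1) * mittagLeffler β (γ - n) (a * (s : ℂ) ^ β))
      (Set.Ioi 0) := by
  induction n with
  | zero => simpa using hf
  | succ n ih =>
    intro t ht
    rw [iteratedDeriv_succ, (ih.eventuallyEq_of_mem (Ioi_mem_nhds ht)).deriv_eq,
      (hasDerivAt_cpow_mul_mittagLeffler hβ (γ - n) a ht).deriv]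
    push_cast
    rw [sub_add_eq_sub_sub]

lemma intervalIntegrable_cpow_mul_sub_cpow {γ δ : ℂ} (hγ : 0 < γ.re) (hδ : 0 < δ.re)
    {t : ℝ} (ht : 0 < t) :
    IntervalIntegrable (fun s : ℝ => (s : ℂ) ^ (γ - 1) * ((t : ℂ) - s) ^ (δ - 1)) volume 0 t := by
  refine intervalIntegral.intervalIntegrable_of_integral_ne_zero ?_
  rw [Complex.betaIntegral_scaled _ _ ht]
  refine mul_ne_zero ?_ fun h => ?_
  · simp [Complex.cpow_eq_zero_iff, ht.ne']
  · have := Complex.Gamma_mul_Gamma_eq_betaIntegral hγ hδ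
    rw [h, mul_zero] at this
    exact mul_ne_zero (Complex.Gamma_ne_zero_of_re_pos hγ)
      (Complex.Gamma_ne_zero_of_re_pos hδ) this

/-- `I^δ_{0,t} (t^{γ-1} E_{β,γ}(a t^β)) = t^{γ+δ-1} E_{β,γ+δ}(a t^β)`. -/
lemma rlIntegral_cpow_mul_mittagLeffler {β γ δ : ℂ} (hβ : 0 < β.re) (hγ : 0 < γ.re)
    (hδ : 0 < δ.re) (a : ℂ) {t : ℝ} (ht : 0 < t) :
    rlIntegral 0 δ (fun s : ℝ => (s : ℂ) ^ (γ - 1) * mittagLeffler β γ (a * (s : ℂ) ^ β)) t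
      = (t : ℂ) ^ (γ + δ - 1) * mittagLeffler β (γ + δ) (a * (t : ℂ) ^ β) := by
  have hsum := summable_norm_mittagLeffler hβ γ (a * (t : ℂ) ^ β)
  have h := intervalIntegral.hasSum_integral_of_dominated_convergence
    (μ := volume) (a := 0) (b := t)
    (F := fun (k : ℕ) (s : ℝ) => a ^ k / Complex.Gamma (β * k + γ)
      * ((s : ℂ) ^ (β * k + γ - 1) * ((t : ℂ) - s) ^ (δ - 1)))
    (f := fun s : ℝ => (s : ℂ) ^ (γ - 1) * mittagLeffler β γ (a * (s : ℂ) ^ β)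
      * ((t - s : ℝ) : ℂ) ^ (δ - 1))
    (fun k s => ‖(a * (t : ℂ) ^ β) ^ k / Complex.Gamma (β * k + γ)‖
      * ‖(s : ℂ) ^ (γ - 1) * ((t : ℂ) - s) ^ (δ - 1)‖)
    (fun k => by
      refine Measurable.aestronglyMeasurable ?_
      fun_prop)
    (fun k => Eventually.of_forall fun s hs => by
      rw [Set.uIoc_of_le ht.le] at hs
      have hle : ‖(s : ℂ) ^ β‖ ≤ ‖(t : ℂ) ^ β‖ := by
        rw [Complex.norm_cpow_eq_rpow_re_of_pos hs.1, Complex.norm_cpow_eq_rpow_re_of_pos ht]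
        exact Real.rpow_le_rpow hs.1.le hs.2 hβ.le
      rw [add_sub_assoc, ← ofReal_cpow_mul_pow hs.1, mul_pow]
      simp only [norm_mul, norm_div, norm_pow]
      calc ‖a‖ ^ k / ‖Complex.Gamma (β * k + γ)‖
            * (‖(s : ℂ) ^ (γ - 1)‖ * ‖(s : ℂ) ^ β‖ ^ k * ‖((t : ℂ) - s) ^ (δ - 1)‖)
          ≤ ‖a‖ ^ k / ‖Complex.Gamma (β * k + γ)‖
            * (‖(s : ℂ) ^ (γ - 1)‖ * ‖(t : ℂ) ^ β‖ ^ k * ‖((t : ℂ) - s) ^ (δ - 1)‖) := by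
            gcongr
        _ = _ := by ring)
    (Eventually.of_forall fun s _ => hsum.mul_right _)
    (by
      simp_rw [tsum_mul_right]
      exact (intervalIntegrable_cpow_mul_sub_cpow hγ hδ ht).norm.const_mul _)
    (Eventually.of_forall fun s hs => by
      rw [Set.uIoc_of_le ht.le] at hs
      have := (hasSum_cpow_mul_mittagLeffler hβ γ a (γ - 1) hs.1).mul_right
        (((t - s : ℝ) : ℂ) ^ (δ - 1))
      refine this.congr_fun fun k => ?_
      rw [Complex.ofReal_sub, add_sub_assoc, mul_assoc])
  have h' := h.mul_left (1 / Complex.Gamma δ)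
  refine h'.unique ((hasSum_cpow_mul_mittagLeffler hβ (γ + δ) a (γ + δ - 1) ht).congr_fun ?_)
  intro k
  have hk : 0 < (β * k + γ).re := by
    have : 0 ≤ β.re * k := by positivity
    simpa using by linarith
  have hΓ := Complex.Gamma_mul_Gamma_eq_betaIntegral hk hδ
  have h1 := Complex.Gamma_ne_zero_of_re_pos hk
  have h2 := Complex.Gamma_ne_zero_of_re_pos hδ
  have h3 : Complex.Gamma (β * k + γ + δ) ≠ 0 :=
    Complex.Gamma_ne_zero_of_re_pos (by rw [Complex.add_re]; positivity)
  rw [intervalIntegral.integral_const_mul, Complex.betaIntegral_scaled _ _ ht,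
    show β * k + (γ + δ - 1) = β * k + γ + δ - 1 by ring, ← add_assoc (β * k) γ δ]
  field_simp
  linear_combination (-a ^ k * (t : ℂ) ^ (β * k + γ + δ - 1)) * hΓ

/-- For `Re(α) > 0`, `Re(β) > 0`, `Re(γ) > 0`, `a ∈ ℝ` and `t > 0`:
`D^α_{0,t} ( t^{γ−1} E_{β,γ}(a t^β) ) = t^{γ−α−1} E_{β,γ−α}(a t^β)`. -/
theorem rlDeriv_mittagLeffler (α β γ : ℂ) (hα : 0 < α.re) (hβ : 0 < β.re) (hγ : 0 < γ.re)
    (a : ℝ) (t : ℝ) (ht : 0 < t) :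
    rlDeriv 0 α (fun s : ℝ => (s : ℂ) ^ (γ - 1) * mittagLeffler β γ ((a : ℂ) * (s : ℂ) ^ β)) t
      = (t : ℂ) ^ (γ - α - 1) * mittagLeffler β (γ - α) ((a : ℂ) * (t : ℂ) ^ β) := by
  have hfl : 0 ≤ ⌊α.re⌋ := Int.floor_nonneg.2 hα.le
  set n : ℕ := (⌊α.re⌋ + 1).toNat
  have hn : (n : ℝ) = ⌊α.re⌋ + 1 := by
    have : (n : ℤ) = ⌊α.re⌋ + 1 := Int.toNat_of_nonneg (by omega)
    exact_mod_cast this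
  have hδ : 0 < ((n : ℂ) - α).re := by
    rw [Complex.sub_re, Complex.natCast_re, hn]
    linarith [Int.lt_floor_add_one α.re]
  have h := iteratedDeriv_eqOn_cpow_mul_mittagLeffler hβ (γ + (n - α)) a
    (fun s hs => rlIntegral_cpow_mul_mittagLeffler hβ hγ hδ a hs) n ht
  rw [show γ + (n - α) - n = γ - α by ring] at h
  exact h
end

section
/- Let 1 < α₁ < 2, 0 < α₂ < α₁, ρ > 0, μ > 0 and T > 0. Then there exists a constant c > 0, depending only on α₁, α₂, ρ, μ and T, such that for every t ∈ (0, T] and every λ > 0, |E_{(α₁−α₂,α₁),ρ}(−μ t^{α₁−α₂}, −λ t^{α₁})| ≤ c / (λ t^{α₁}). -/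
/-- The bivariate Mittag-Leffler function
`E_{(α,β),ρ}(x,y) = ∑_{n=0}^∞ ∑_{k=0}^n (n!/(k!(n−k)!)) x^k y^{n−k} / Γ(ρ + αn + βk)`. -/
noncomputable def mlBi (α β ρ x y : ℝ) : ℝ :=
  ∑' n : ℕ, ∑ k ∈ Finset.range (n + 1),
    (Nat.choose n k : ℝ) * x ^ k * y ^ (n - k) / Real.Gamma (ρ + α * n + β * k)

section Hankel

open Set Filter Topology MeasureTheory

/-- The integrand `exp (exp ζ + a ζ)` of the Hankel integral in the logarithmic coordinate. -/
noncomputable def hankelKernel (a ζ : ℂ) : ℂ := Complex.exp (Complex.exp ζ + a * ζ)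

/-- The integral of `f` along the contour that comes in along `Im ζ = -θ`, climbs the segment
`Re ζ = X` and leaves along `Im ζ = θ`. -/
noncomputable def hankelIntegral (θ X : ℝ) (f : ℂ → ℂ) : ℂ :=
  (∫ x : ℝ in Ioi X, f (x + θ * Complex.I)) - (∫ x : ℝ in Ioi X, f (x + (-θ : ℝ) * Complex.I)) +
    Complex.I * ∫ v in (-θ)..θ, f (X + v * Complex.I)

lemma norm_hankelKernel (a : ℂ) (x v : ℝ) :
    ‖hankelKernel a (x + v * Complex.I)‖ =
      Real.exp (Real.exp x * Real.cos v + (a.re * x - a.im * v)) := by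
  simp [hankelKernel, Complex.norm_exp, Complex.exp_re]

lemma differentiable_hankelKernel (a : ℂ) : Differentiable ℂ (hankelKernel a) := by
  unfold hankelKernel; fun_prop

lemma hankelKernel_add (a b ζ : ℂ) :
    hankelKernel (a + b) ζ = hankelKernel a ζ * Complex.exp (b * ζ) := by
  rw [hankelKernel, hankelKernel, ← Complex.exp_add]; ring_nf

lemma tendsto_exp_mul_add_atBot {c : ℝ} (hc : c < 0) (b : ℝ) :
    Tendsto (fun x : ℝ => Real.exp x * c + b * x) atTop atBot := by
  have h1 : Tendsto (fun x : ℝ => x / Real.exp x) atTop (𝓝 0) := by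
    simpa using Real.tendsto_pow_mul_exp_neg_atTop_nhds_zero 1 |>.congr fun x => by
      rw [Real.exp_neg, pow_one, div_eq_mul_inv]
  have h2 : Tendsto (fun x : ℝ => c + b * (x / Real.exp x)) atTop (𝓝 c) := by
    simpa using (h1.const_mul b).const_add c
  refine (Real.tendsto_exp_atTop.atTop_mul_neg hc h2).congr fun x => ?_
  field_simp

lemma integrableOn_exp_exp {c : ℝ} (hc : c < 0) (b X : ℝ) :
    IntegrableOn (fun x : ℝ => Real.exp (Real.exp x * c + b * x)) (Ioi X) := by
  refine integrable_of_isBigO_exp_neg one_pos (by fun_prop) ?_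
  refine Asymptotics.IsBigO.of_bound 1 ?_
  filter_upwards [(tendsto_exp_mul_add_atBot hc (b + 1)).eventually_le_atBot 0] with x hx
  simp only [Real.norm_eq_abs, Real.abs_exp, one_mul]
  apply Real.exp_le_exp.mpr
  linarith

lemma integrableOn_hankelKernel {v : ℝ} (hv : Real.cos v < 0) (a : ℂ) (X : ℝ) :
    IntegrableOn (fun x : ℝ => hankelKernel a (x + v * Complex.I)) (Ioi X) := by
  refine Integrable.mono' ((integrableOn_exp_exp hv a.re X).mul_const (Real.exp (-(a.im * v)))) ?_ ?_
  · have := (differentiable_hankelKernel a).continuous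
    exact Continuous.aestronglyMeasurable (by fun_prop)
  · refine ae_of_all _ fun x => ?_
    rw [norm_hankelKernel, ← Real.exp_add]
    apply le_of_eq; ring_nf

lemma hankelIntegral_eq_of_differentiableOn {θ X Y : ℝ} (hXY : X ≤ Y) {f : ℂ → ℂ}
    (hf : DifferentiableOn ℂ f (uIcc X Y ×ℂ uIcc (-θ) θ))
    (h₁ : IntegrableOn (fun x : ℝ => f (x + θ * Complex.I)) (Ioi X))
    (h₂ : IntegrableOn (fun x : ℝ => f (x + (-θ : ℝ) * Complex.I)) (Ioi X)) :
    hankelIntegral θ X f = hankelIntegral θ Y f := by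
  have key := Complex.integral_boundary_rect_eq_zero_of_differentiableOn f ⟨X, -θ⟩ ⟨Y, θ⟩ hf
  have e₁ := intervalIntegral.integral_interval_add_Ioi' (a := X) (b := Y)
    ((intervalIntegrable_iff_integrableOn_Ioc_of_le hXY).mpr
      (h₁.mono_set Ioc_subset_Ioi_self)) (h₁.mono_set (Ioi_subset_Ioi hXY))
  have e₂ := intervalIntegral.integral_interval_add_Ioi' (a := X) (b := Y)
    ((intervalIntegrable_iff_integrableOn_Ioc_of_le hXY).mpr
      (h₂.mono_set Ioc_subset_Ioi_self)) (h₂.mono_set (Ioi_subset_Ioi hXY))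
  simp only [smul_eq_mul] at key
  rw [hankelIntegral, hankelIntegral, ← e₁, ← e₂]
  linear_combination -key

lemma integral_Ioi_sub_integral_Ioi {a b X : ℝ} {f : ℂ → ℂ} (hf : Differentiable ℂ f)
    (ha : IntegrableOn (fun x : ℝ => f (x + a * Complex.I)) (Ioi X))
    (hb : IntegrableOn (fun x : ℝ => f (x + b * Complex.I)) (Ioi X))
    (h : Tendsto (fun T : ℝ => ∫ v in a..b, f (T + v * Complex.I)) atTop (𝓝 0)) :
    (∫ x : ℝ in Ioi X, f (x + a * Complex.I)) - (∫ x : ℝ in Ioi X, f (x + b * Complex.I)) =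
      Complex.I * ∫ v in a..b, f (X + v * Complex.I) := by
  have l₁ := intervalIntegral_tendsto_integral_Ioi X ha tendsto_id
  have l₂ := intervalIntegral_tendsto_integral_Ioi X hb tendsto_id
  have l₃ := ((l₁.sub l₂).add (h.const_mul Complex.I))
  rw [mul_zero, add_zero] at l₃
  refine tendsto_nhds_unique l₃ (tendsto_const_nhds.congr fun T => ?_)
  have key := Complex.integral_boundary_rect_eq_zero_of_differentiableOn f ⟨X, a⟩ ⟨T, b⟩
    hf.differentiableOn
  simp only [smul_eq_mul, id] at key ⊢
  linear_combination -key

lemma tendsto_integral_hankelKernel {a b c : ℝ} (hc : c < 0) (z : ℂ)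
    (h : ∀ v ∈ uIoc a b, Real.cos v ≤ c) :
    Tendsto (fun T : ℝ => ∫ v in a..b, hankelKernel z (T + v * Complex.I)) atTop (𝓝 0) := by
  obtain ⟨M, hM⟩ : ∃ M, ∀ v ∈ uIoc a b, -(z.im * v) ≤ M := by
    obtain ⟨M, hM⟩ := (isCompact_uIcc (a := a) (b := b)).bddAbove_image
      (f := fun v => -(z.im * v)) (by fun_prop)
    exact ⟨M, fun v hv => hM ⟨v, uIoc_subset_uIcc hv, rfl⟩⟩
  have lim : Tendsto (fun T : ℝ => Real.exp ((Real.exp T * c + z.re * T) + M) * |b - a|) atTop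
      (𝓝 0) := by
    simpa using (Real.tendsto_exp_atBot.comp
      (tendsto_atBot_add_const_right _ M (tendsto_exp_mul_add_atBot hc z.re))).mul_const |b - a|
  refine squeeze_zero_norm (fun T => ?_) lim
  refine intervalIntegral.norm_integral_le_of_norm_le_const fun v hv => ?_
  rw [norm_hankelKernel]
  apply Real.exp_le_exp.mpr
  have := mul_le_mul_of_nonneg_left (h v hv) (Real.exp_pos T).le
  linarith [hM v hv]

lemma cos_le_cos_of_mem_Icc {θ v : ℝ} (hθ : 0 ≤ θ) (hv : v ∈ Icc θ Real.pi) :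
    Real.cos v ≤ Real.cos θ :=
  Real.cos_le_cos_of_nonneg_of_le_pi hθ hv.2 hv.1

lemma hankelIntegral_hankelKernel_eq_pi {θ : ℝ} (h₁ : Real.pi / 2 < θ) (h₂ : θ ≤ Real.pi) (X : ℝ)
    (a : ℂ) : hankelIntegral θ X (hankelKernel a) = hankelIntegral Real.pi X (hankelKernel a) := by
  have hpi := Real.pi_pos
  have hc : Real.cos θ < 0 := Real.cos_neg_of_pi_div_two_lt_of_lt h₁ (by linarith)
  have hi : ∀ v, Real.cos v < 0 → _ := fun v hv => integrableOn_hankelKernel hv a X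
  have hd := differentiable_hankelKernel a
  have r₁ := integral_Ioi_sub_integral_Ioi hd (hi θ hc) (hi Real.pi (by simp))
    (tendsto_integral_hankelKernel hc a fun v hv => by
      rw [uIoc_of_le h₂] at hv
      exact cos_le_cos_of_mem_Icc (by linarith) ⟨hv.1.le, hv.2⟩)
  have r₂ := integral_Ioi_sub_integral_Ioi hd (hi (-Real.pi) (by simp)) (hi (-θ) (by simpa))
    (tendsto_integral_hankelKernel hc a fun v hv => by
      rw [uIoc_of_le (by linarith)] at hv
      rw [← Real.cos_neg v]
      exact cos_le_cos_of_mem_Icc (by linarith) ⟨by linarith [hv.2], by linarith [hv.1]⟩)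
  have hint : ∀ u v : ℝ, IntervalIntegrable (fun t : ℝ => hankelKernel a (X + t * Complex.I))
      volume u v := fun u v => by
    have := hd.continuous
    exact Continuous.intervalIntegrable (by fun_prop) _ _
  have s₁ := intervalIntegral.integral_add_adjacent_intervals (hint (-Real.pi) (-θ)) (hint (-θ) θ)
  have s₂ := intervalIntegral.integral_add_adjacent_intervals (hint (-Real.pi) θ) (hint θ Real.pi)
  rw [hankelIntegral, hankelIntegral, ← s₂, ← s₁]
  linear_combination r₁ + r₂

lemma integral_exp_neg_exp (a : ℂ) (ha : 0 < a.re) :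
    ∫ x : ℝ, Complex.exp (-Complex.exp x + a * x) = Complex.Gamma a := by
  have himg : Real.exp '' univ = Ioi 0 := by rw [image_univ, Real.range_exp]
  rw [Complex.Gamma_eq_integral ha, Complex.GammaIntegral, ← himg,
    integral_image_eq_integral_abs_deriv_smul MeasurableSet.univ
      (fun x _ => (Real.hasDerivAt_exp x).hasDerivWithinAt) Real.exp_injective.injOn,
    setIntegral_univ]
  refine integral_congr_ae (ae_of_all _ fun x => ?_)
  simp only [Real.abs_exp, Complex.real_smul]
  rw [Complex.cpow_def_of_ne_zero (by simp), ← Complex.ofReal_log (Real.exp_pos x).le,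
    Real.log_exp]
  push_cast
  rw [← Complex.exp_add, ← Complex.exp_add]
  ring_nf

lemma hankelIntegral_hankelKernel_of_re_pos {a : ℂ} (ha : 0 < a.re) :
    hankelIntegral Real.pi 0 (hankelKernel a) =
      2 * Complex.I * Complex.sin (Real.pi * a) * Complex.Gamma a := by
  have hcos : ∀ v : ℝ, Real.cos v = -1 →
      (∀ X : ℝ, IntegrableOn (fun x : ℝ => hankelKernel a (x + v * Complex.I)) (Ioi X)) ∧
      Integrable (fun x : ℝ => hankelKernel a (x + v * Complex.I)) := by
    intro v hv
    have h₀ : ∀ X : ℝ, IntegrableOn (fun x : ℝ => hankelKernel a (x + v * Complex.I)) (Ioi X) :=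
      fun X => integrableOn_hankelKernel (by rw [hv]; norm_num) a X
    refine ⟨h₀, ?_⟩
    rw [← integrableOn_univ, ← Iic_union_Ioi (a := 0)]
    refine IntegrableOn.union ?_ (h₀ 0)
    refine Integrable.mono' ((integrableOn_exp_mul_Iic ha 0).mul_const
      (Real.exp (-(a.im * v)))) ?_ ?_
    · have := (differentiable_hankelKernel a).continuous
      exact Continuous.aestronglyMeasurable (by fun_prop)
    · refine ae_of_all _ fun x => ?_
      rw [norm_hankelKernel, ← Real.exp_add, hv]
      apply Real.exp_le_exp.mpr
      linarith [Real.exp_pos x]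
  have hray : ∀ v : ℝ, Complex.exp (v * Complex.I) = -1 →
      ∫ x : ℝ, hankelKernel a (x + v * Complex.I) =
        Complex.exp (v * Complex.I * a) * Complex.Gamma a := by
    intro v hv
    rw [← integral_exp_neg_exp a ha, ← integral_const_mul]
    refine integral_congr_ae (ae_of_all _ fun x => ?_)
    have h : Complex.exp (x + v * Complex.I) = -Complex.exp x := by
      rw [Complex.exp_add, hv, mul_neg_one]
    simp only [hankelKernel]
    rw [h, ← Complex.exp_add]
    ring_nf
  have hpos := hcos Real.pi Real.cos_pi
  have hneg := hcos (-Real.pi) (by simp)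
  have l₁ := (aecover_Ioi (μ := volume) (tendsto_id (α := ℝ) (x := atBot))
    ).integral_tendsto_of_countably_generated hpos.2
  have l₂ := (aecover_Ioi (μ := volume) (tendsto_id (α := ℝ) (x := atBot))
    ).integral_tendsto_of_countably_generated hneg.2
  have l₃ : Tendsto (fun X : ℝ => ∫ v in (-Real.pi)..Real.pi, hankelKernel a (X + v * Complex.I))
      atBot (𝓝 0) := by
    have lim : Tendsto (fun X : ℝ => Real.exp (Real.exp X + (a.re * X + |a.im| * Real.pi)) *
        |Real.pi - -Real.pi|) atBot (𝓝 0) := by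
      have h := (tendsto_id (α := ℝ) (x := atBot)).const_mul_atBot ha
      have := Real.tendsto_exp_atBot.add_atBot
        (tendsto_atBot_add_const_right _ (|a.im| * Real.pi) h)
      simpa using (Real.tendsto_exp_atBot.comp this).mul_const |Real.pi - -Real.pi|
    refine squeeze_zero_norm (fun X => ?_) lim
    refine intervalIntegral.norm_integral_le_of_norm_le_const fun v hv => ?_
    rw [uIoc_of_le (by linarith [Real.pi_pos])] at hv
    rw [norm_hankelKernel]
    apply Real.exp_le_exp.mpr
    have h₁ : Real.exp X * Real.cos v ≤ Real.exp X :=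
      mul_le_of_le_one_right (Real.exp_pos X).le (Real.cos_le_one v)
    have h₂ : -(a.im * v) ≤ |a.im| * Real.pi := by
      refine (neg_le_abs _).trans ?_
      rw [abs_mul]
      exact mul_le_mul_of_nonneg_left (abs_le.mpr ⟨hv.1.le, hv.2⟩) (abs_nonneg _)
    linarith
  have lim := (l₁.sub l₂).add (l₃.const_mul Complex.I)
  rw [hray _ Complex.exp_pi_mul_I, hray (-Real.pi) (by
    rw [Complex.ofReal_neg, neg_mul, Complex.exp_neg, Complex.exp_pi_mul_I]; norm_num),
    mul_zero, add_zero] at lim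
  have const : ∀ᶠ X : ℝ in atBot, hankelIntegral Real.pi X (hankelKernel a) =
      hankelIntegral Real.pi 0 (hankelKernel a) := by
    filter_upwards [eventually_le_atBot 0] with X hX
    exact hankelIntegral_eq_of_differentiableOn hX
      (differentiable_hankelKernel a).differentiableOn (hpos.1 X) (hneg.1 X)
  have := tendsto_nhds_unique (tendsto_const_nhds.congr' (const.mono fun X hX => hX.symm)) lim
  have e₁ : (Real.pi : ℂ) * Complex.I * a = Real.pi * a * Complex.I := by ring
  have e₂ : ((-Real.pi : ℝ) : ℂ) * Complex.I * a = -(Real.pi * a) * Complex.I := by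
    push_cast; ring
  rw [this, Complex.sin, e₁, e₂]
  linear_combination (-Complex.Gamma a) * (Complex.exp (-(Real.pi * a) * Complex.I) -
    Complex.exp (Real.pi * a * Complex.I)) * Complex.I_sq

lemma differentiable_integral_hankelKernel {μ : Measure ℝ} {γ : ℝ → ℂ} (hγ : Continuous γ)
    (hint : ∀ B : ℝ, Integrable
      (fun x => Real.exp (B * ‖γ x‖ + (Complex.exp (γ x)).re)) μ) :
    Differentiable ℂ fun a => ∫ x, hankelKernel a (γ x) ∂μ := by
  intro a₀
  have hcont : ∀ a, Continuous fun x => hankelKernel a (γ x) := fun a =>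
    (differentiable_hankelKernel a).continuous.comp hγ
  have hnorm : ∀ a x, ‖hankelKernel a (γ x)‖ ≤
      Real.exp (‖a‖ * ‖γ x‖ + (Complex.exp (γ x)).re) := by
    intro a x
    rw [hankelKernel, Complex.norm_exp, Complex.add_re, add_comm]
    apply Real.exp_le_exp.mpr
    have := (Complex.re_le_norm (a * γ x)).trans (norm_mul_le _ _)
    linarith
  refine (hasDerivAt_integral_of_dominated_loc_of_deriv_le (s := Metric.ball a₀ 1)
    (F := fun a x => hankelKernel a (γ x)) (F' := fun a x => γ x * hankelKernel a (γ x))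
    (bound := fun x => Real.exp ((‖a₀‖ + 2) * ‖γ x‖ + (Complex.exp (γ x)).re))
    (Metric.ball_mem_nhds _ one_pos) (Eventually.of_forall fun a => (hcont a).aestronglyMeasurable)
    ((hint ‖a₀‖).mono' (hcont a₀).aestronglyMeasurable (ae_of_all _ (hnorm a₀)))
    (hγ.mul (hcont a₀)).aestronglyMeasurable ?_ (hint _) ?_).2.differentiableAt
  · refine ae_of_all _ fun x a ha => ?_
    have ha' : ‖a‖ ≤ ‖a₀‖ + 1 := by
      rw [Metric.mem_ball, dist_eq_norm] at ha
      linarith [norm_le_norm_add_norm_sub' a a₀]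
    calc ‖γ x * hankelKernel a (γ x)‖
        ≤ Real.exp ‖γ x‖ * Real.exp (‖a‖ * ‖γ x‖ + (Complex.exp (γ x)).re) := by
          rw [norm_mul]
          gcongr
          · linarith [Real.add_one_le_exp ‖γ x‖]
          · exact hnorm a x
      _ ≤ _ := by
          rw [← Real.exp_add]
          apply Real.exp_le_exp.mpr
          nlinarith [norm_nonneg (γ x)]
  · refine ae_of_all _ fun x a _ => ?_
    have := (((hasDerivAt_id a).mul_const (γ x)).const_add (Complex.exp (γ x))).cexp
    simpa [hankelKernel, mul_comm] using this

lemma differentiable_hankelIntegral_hankelKernel {θ : ℝ} (hθ : Real.cos θ < 0) :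
    Differentiable ℂ fun a => hankelIntegral θ 0 (hankelKernel a) := by
  have hray : ∀ v : ℝ, Real.cos v < 0 → Differentiable ℂ fun a =>
      ∫ x : ℝ in Ioi 0, hankelKernel a (x + v * Complex.I) := by
    intro v hv
    refine differentiable_integral_hankelKernel (γ := fun x : ℝ => (x : ℂ) + v * Complex.I)
      (by fun_prop) fun B => ?_
    refine Integrable.mono' ((integrableOn_exp_exp hv |B| 0).mul_const (Real.exp (|B| * |v|)))
      (Continuous.aestronglyMeasurable (by fun_prop)) ?_
    filter_upwards [ae_restrict_mem measurableSet_Ioi] with x hx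
    rw [Real.norm_eq_abs, Real.abs_exp, ← Real.exp_add]
    apply Real.exp_le_exp.mpr
    have h₁ : ‖(x : ℂ) + v * Complex.I‖ ≤ x + |v| := by
      refine (norm_add_le _ _).trans ?_
      simp [abs_of_pos (mem_Ioi.mp hx)]
    have h₂ := mul_le_mul_of_nonneg_left h₁ (abs_nonneg B)
    have h₃ := mul_le_mul_of_nonneg_right (le_abs_self B) (norm_nonneg ((x : ℂ) + v * Complex.I))
    have h₄ : (Complex.exp ((x : ℂ) + v * Complex.I)).re = Real.exp x * Real.cos v := by
      simp [Complex.exp_re]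
    rw [h₄]
    linarith
  have harc : Differentiable ℂ fun a => ∫ v in (-θ)..θ, hankelKernel a ((0 : ℝ) + v * Complex.I) := by
    simp only [intervalIntegral]
    refine Differentiable.sub ?_ ?_ <;>
    · refine differentiable_integral_hankelKernel
        (γ := fun v : ℝ => ((0 : ℝ) : ℂ) + v * Complex.I) (by fun_prop) fun B => ?_
      exact (Continuous.integrableOn_Icc (by fun_prop)).mono_set Ioc_subset_Icc_self
  exact ((hray θ hθ).sub (hray (-θ) (by simpa))).add (harc.const_mul Complex.I)

/-- **Hankel's formula** for the reciprocal Gamma function. -/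
theorem hankelIntegral_hankelKernel {θ : ℝ} (h₁ : Real.pi / 2 < θ) (h₂ : θ ≤ Real.pi) (X : ℝ)
    (a : ℂ) :
    hankelIntegral θ X (hankelKernel a) = 2 * Real.pi * Complex.I * (Complex.Gamma (1 - a))⁻¹ := by
  have base : ∀ a, hankelIntegral Real.pi 0 (hankelKernel a) =
      2 * Real.pi * Complex.I * (Complex.Gamma (1 - a))⁻¹ := by
    have hd₁ := differentiable_hankelIntegral_hankelKernel (θ := Real.pi) (by simp)
    have hd₂ : Differentiable ℂ fun a : ℂ =>
        2 * Real.pi * Complex.I * (Complex.Gamma (1 - a))⁻¹ :=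
      (Complex.differentiable_one_div_Gamma.comp (differentiable_id.const_sub 1)).const_mul _
    refine congrFun (AnalyticOnNhd.eq_of_eventuallyEq (z₀ := 1 / 2)
      (fun z _ => hd₁.analyticAt z) (fun z _ => hd₂.analyticAt z) ?_)
    have hev : ∀ᶠ z : ℂ in 𝓝 (1 / 2), 0 < z.re ∧ z.re < 1 :=
      (IsOpen.inter (isOpen_lt continuous_const Complex.continuous_re)
        (isOpen_lt Complex.continuous_re continuous_const)).mem_nhds (by norm_num)
    filter_upwards [hev] with z hz
    rw [hankelIntegral_hankelKernel_of_re_pos hz.1]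
    have hG₁ := Complex.Gamma_ne_zero_of_re_pos hz.1
    have hG₂ := Complex.Gamma_ne_zero_of_re_pos (s := 1 - z) (by simpa using hz.2)
    have hrefl := Complex.Gamma_mul_Gamma_one_sub z
    have hs : Complex.sin (Real.pi * z) ≠ 0 := by
      intro h
      rw [h, div_zero] at hrefl
      exact mul_ne_zero hG₁ hG₂ hrefl
    rw [eq_div_iff hs] at hrefl
    field_simp
    linear_combination hrefl
  have hpi := Real.pi_pos
  rw [hankelIntegral_hankelKernel_eq_pi h₁ h₂, ← base]
  have hc : ∀ X, IntegrableOn (fun x : ℝ => hankelKernel a (x + Real.pi * Complex.I)) (Ioi X) :=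
    fun X => integrableOn_hankelKernel (by simp) a X
  have hc' : ∀ X, IntegrableOn
      (fun x : ℝ => hankelKernel a (x + (-Real.pi : ℝ) * Complex.I)) (Ioi X) :=
    fun X => integrableOn_hankelKernel (by simp) a X
  have hd := differentiable_hankelKernel a
  rcases le_total X 0 with hX | hX
  · exact hankelIntegral_eq_of_differentiableOn hX hd.differentiableOn (hc X) (hc' X)
  · exact (hankelIntegral_eq_of_differentiableOn hX hd.differentiableOn (hc 0) (hc' 0)).symm

/-- Integrability of `f` along the three pieces of the contour of `hankelIntegral`. -/
structure HankelIntegrable (θ X : ℝ) (f : ℂ → ℂ) : Prop where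
  upper : IntegrableOn (fun x : ℝ => f (x + θ * Complex.I)) (Ioi X)
  lower : IntegrableOn (fun x : ℝ => f (x + (-θ : ℝ) * Complex.I)) (Ioi X)
  arc : IntegrableOn (fun v : ℝ => f (X + v * Complex.I)) (Ioc (-θ) θ)

/-- The integral of `‖f‖` along the contour of `hankelIntegral`. -/
noncomputable def hankelNorm (θ X : ℝ) (f : ℂ → ℂ) : ℝ :=
  (∫ x : ℝ in Ioi X, ‖f (x + θ * Complex.I)‖) +
    (∫ x : ℝ in Ioi X, ‖f (x + (-θ : ℝ) * Complex.I)‖) +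
    ∫ v : ℝ in Ioc (-θ) θ, ‖f (X + v * Complex.I)‖

lemma hankelNorm_nonneg (θ X : ℝ) (f : ℂ → ℂ) : 0 ≤ hankelNorm θ X f := by
  unfold hankelNorm; positivity

lemma hankelIntegral_eq_of_nonneg {θ : ℝ} (hθ : 0 ≤ θ) (X : ℝ) (f : ℂ → ℂ) :
    hankelIntegral θ X f = (∫ x : ℝ in Ioi X, f (x + θ * Complex.I)) -
      (∫ x : ℝ in Ioi X, f (x + (-θ : ℝ) * Complex.I)) +
      Complex.I * ∫ v : ℝ in Ioc (-θ) θ, f (X + v * Complex.I) := by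
  rw [hankelIntegral, intervalIntegral.integral_of_le (by linarith)]

lemma hankelIntegrable_hankelKernel {θ : ℝ} (hθ : Real.cos θ < 0) (X : ℝ) (a : ℂ) :
    HankelIntegrable θ X (hankelKernel a) where
  upper := integrableOn_hankelKernel hθ a X
  lower := integrableOn_hankelKernel (by simpa) a X
  arc := by
    have := (differentiable_hankelKernel a).continuous
    exact (Continuous.integrableOn_Icc (by fun_prop)).mono_set Ioc_subset_Icc_self

/-- The region swept by the contours of `hankelIntegral θ Y` for `X ≤ Y`. -/
def hankelStrip (θ X : ℝ) : Set ℂ := Ici X ×ℂ Icc (-θ) θ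

lemma mem_hankelStrip {θ X x v : ℝ} :
    (x : ℂ) + v * Complex.I ∈ hankelStrip θ X ↔ X ≤ x ∧ -θ ≤ v ∧ v ≤ θ := by
  simp [hankelStrip, Complex.mem_reProdIm]

lemma norm_hankelIntegral_le {θ X C : ℝ} (hθ : 0 ≤ θ) {f g : ℂ → ℂ} (hg : HankelIntegrable θ X g)
    (h : ∀ ζ ∈ hankelStrip θ X, ‖f ζ‖ ≤ C * ‖g ζ‖) :
    ‖hankelIntegral θ X f‖ ≤ C * hankelNorm θ X g := by
  have h₁ : ‖∫ x : ℝ in Ioi X, f (x + θ * Complex.I)‖ ≤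
      ∫ x : ℝ in Ioi X, C * ‖g (x + θ * Complex.I)‖ :=
    norm_integral_le_of_norm_le (hg.upper.norm.const_mul C) <| by
      filter_upwards [ae_restrict_mem measurableSet_Ioi] with x hx
      exact h _ (mem_hankelStrip.mpr ⟨(mem_Ioi.mp hx).le, by linarith, le_rfl⟩)
  have h₂ : ‖∫ x : ℝ in Ioi X, f (x + (-θ : ℝ) * Complex.I)‖ ≤
      ∫ x : ℝ in Ioi X, C * ‖g (x + (-θ : ℝ) * Complex.I)‖ :=
    norm_integral_le_of_norm_le (hg.lower.norm.const_mul C) <| by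
      filter_upwards [ae_restrict_mem measurableSet_Ioi] with x hx
      exact h _ (mem_hankelStrip.mpr ⟨(mem_Ioi.mp hx).le, le_rfl, by linarith⟩)
  have h₃ : ‖∫ v : ℝ in Ioc (-θ) θ, f (X + v * Complex.I)‖ ≤
      ∫ v : ℝ in Ioc (-θ) θ, C * ‖g (X + v * Complex.I)‖ :=
    norm_integral_le_of_norm_le (hg.arc.norm.const_mul C) <| by
      filter_upwards [ae_restrict_mem measurableSet_Ioc] with v hv
      exact h _ (mem_hankelStrip.mpr ⟨le_rfl, hv.1.le, hv.2⟩)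
  rw [integral_const_mul] at h₁ h₂ h₃
  rw [hankelIntegral_eq_of_nonneg hθ, hankelNorm]
  refine (norm_add_le _ _).trans ?_
  rw [norm_mul, Complex.norm_I, one_mul]
  linarith [norm_sub_le (∫ x : ℝ in Ioi X, f (x + θ * Complex.I))
    (∫ x : ℝ in Ioi X, f (x + (-θ : ℝ) * Complex.I))]

lemma hankelIntegral_sum {θ X : ℝ} (hθ : 0 ≤ θ) {ι : Type*} (s : Finset ι) (c : ι → ℂ)
    (f : ι → ℂ → ℂ) (hf : ∀ i ∈ s, HankelIntegrable θ X (f i)) :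
    hankelIntegral θ X (fun ζ => ∑ i ∈ s, c i * f i ζ) =
      ∑ i ∈ s, c i * hankelIntegral θ X (f i) := by
  simp only [hankelIntegral_eq_of_nonneg hθ]
  rw [integral_finsetSum _ fun i hi => (hf i hi).upper.const_mul (c i),
    integral_finsetSum _ fun i hi => (hf i hi).lower.const_mul (c i),
    integral_finsetSum _ fun i hi => (hf i hi).arc.const_mul (c i)]
  simp only [integral_const_mul]
  rw [Finset.mul_sum, ← Finset.sum_sub_distrib, ← Finset.sum_add_distrib]
  exact Finset.sum_congr rfl fun i _ => by ring

lemma hasSum_integral_mul_pow {μ : Measure ℝ} {g q : ℝ → ℂ} {r : ℝ} (hg : Integrable g μ)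
    (hq : AEStronglyMeasurable q μ) (hr : r < 1) (hqr : ∀ᵐ x ∂μ, ‖q x‖ ≤ r) :
    HasSum (fun n : ℕ => ∫ x, g x * q x ^ n ∂μ) (∫ x, g x * (1 - q x)⁻¹ ∂μ) := by
  rcases lt_or_ge r 0 with h | h₀
  · have : μ = 0 := by
      rw [← ae_eq_bot]
      exact eventually_false_iff_eq_bot.mp (hqr.mono fun x hx => by
        linarith [norm_nonneg (q x)])
    simp [this, hasSum_zero]
  have hbound : ∀ n : ℕ, ∀ᵐ x ∂μ, ‖g x * q x ^ n‖ ≤ r ^ n * ‖g x‖ := fun n =>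
    hqr.mono fun x hx => by
      rw [norm_mul, norm_pow, mul_comm]
      gcongr
  have hint : ∀ n : ℕ, Integrable (fun x => g x * q x ^ n) μ := fun n =>
    (hg.norm.const_mul (r ^ n)).mono' (hg.1.mul (hq.pow n)) (hbound n)
  have hsum : Summable fun n : ℕ => ∫ x, ‖g x * q x ^ n‖ ∂μ := by
    refine Summable.of_nonneg_of_le (fun n => by positivity) (fun n => ?_)
      ((summable_geometric_of_lt_one h₀ hr).mul_right (∫ x, ‖g x‖ ∂μ))
    rw [← integral_const_mul]
    exact integral_mono_ae (hint n).norm (hg.norm.const_mul _) (hbound n)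
  have key := hasSum_integral_of_summable_integral_norm hint hsum
  have heq : ∫ x, (∑' n : ℕ, g x * q x ^ n) ∂μ = ∫ x, g x * (1 - q x)⁻¹ ∂μ := by
    refine integral_congr_ae (hqr.mono fun x hx => ?_)
    simp only
    rw [tsum_mul_left, tsum_geometric_of_norm_lt_one (hx.trans_lt hr)]
  rwa [heq] at key

lemma hasSum_hankelIntegral_mul_pow {θ X r : ℝ} (hθ : 0 ≤ θ) {g q : ℂ → ℂ}
    (hg : HankelIntegrable θ X g) (hq : Continuous q) (hr : r < 1)
    (hqr : ∀ ζ ∈ hankelStrip θ X, ‖q ζ‖ ≤ r) :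
    HasSum (fun n : ℕ => hankelIntegral θ X fun ζ => g ζ * q ζ ^ n)
      (hankelIntegral θ X fun ζ => g ζ * (1 - q ζ)⁻¹) := by
  simp only [hankelIntegral_eq_of_nonneg hθ]
  refine ((hasSum_integral_mul_pow hg.upper (Continuous.aestronglyMeasurable (by fun_prop)) hr
    ?_).sub (hasSum_integral_mul_pow hg.lower (Continuous.aestronglyMeasurable (by fun_prop)) hr
    ?_)).add ((hasSum_integral_mul_pow hg.arc (Continuous.aestronglyMeasurable (by fun_prop)) hr
    ?_).mul_left _)
  · filter_upwards [ae_restrict_mem measurableSet_Ioi] with x hx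
    exact hqr _ (mem_hankelStrip.mpr ⟨(mem_Ioi.mp hx).le, by linarith, le_rfl⟩)
  · filter_upwards [ae_restrict_mem measurableSet_Ioi] with x hx
    exact hqr _ (mem_hankelStrip.mpr ⟨(mem_Ioi.mp hx).le, le_rfl, by linarith⟩)
  · filter_upwards [ae_restrict_mem measurableSet_Ioc] with v hv
    exact hqr _ (mem_hankelStrip.mpr ⟨le_rfl, hv.1.le, hv.2⟩)

/-- The symbol `e^{-αζ} (y + x e^{-βζ})` whose `n`-th power generates the `n`-th term of `mlBi`. -/
noncomputable def mlBiSymbol (α β x y : ℝ) (ζ : ℂ) : ℂ :=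
  Complex.exp (-(α * ζ)) * (x * Complex.exp (-(β * ζ)) + y)

lemma differentiable_mlBiSymbol (α β x y : ℝ) : Differentiable ℂ (mlBiSymbol α β x y) := by
  unfold mlBiSymbol; fun_prop

lemma norm_mlBiSymbol_le {α β : ℝ} (hα : 0 ≤ α) (hβ : 0 ≤ β) (x y : ℝ) {θ X : ℝ} (hX : 0 ≤ X)
    {ζ : ℂ} (hζ : ζ ∈ hankelStrip θ X) :
    ‖mlBiSymbol α β x y ζ‖ ≤ Real.exp (-(α * X)) * (|x| + |y|) := by
  have hre : X ≤ ζ.re := hζ.1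
  have h₁ : ‖Complex.exp (-(α * ζ))‖ ≤ Real.exp (-(α * X)) := by
    simp only [Complex.norm_exp, Complex.neg_re, Complex.re_ofReal_mul]
    gcongr
  have h₂ : ‖Complex.exp (-(β * ζ))‖ ≤ 1 := by
    simp only [Complex.norm_exp, Complex.neg_re, Complex.re_ofReal_mul, Real.exp_le_one_iff]
    nlinarith [mul_nonneg hβ (hX.trans hre)]
  rw [mlBiSymbol, norm_mul]
  gcongr
  refine (norm_add_le _ _).trans ?_
  rw [norm_mul, Complex.norm_real, Complex.norm_real, Real.norm_eq_abs, Real.norm_eq_abs]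
  gcongr
  exact mul_le_of_le_one_right (abs_nonneg x) h₂

lemma hankelKernel_mul_mlBiSymbol_pow (α β ρ x y : ℝ) (n : ℕ) (ζ : ℂ) :
    hankelKernel (1 - ρ) ζ * mlBiSymbol α β x y ζ ^ n =
      ∑ k ∈ Finset.range (n + 1), ((n.choose k : ℂ) * x ^ k * y ^ (n - k)) *
        hankelKernel (1 - (ρ + α * n + β * k)) ζ := by
  rw [mlBiSymbol, mul_pow, add_pow, Finset.mul_sum, Finset.mul_sum]
  refine Finset.sum_congr rfl fun k _ => ?_
  have h : (1 - (ρ + α * n + β * k) : ℂ) = (1 - ρ) + (n * (-α) + k * (-β)) := by ring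
  rw [h, hankelKernel_add, add_mul, Complex.exp_add, mul_pow, ← Complex.exp_nat_mul,
    ← Complex.exp_nat_mul, mul_assoc (n : ℂ), mul_assoc (k : ℂ), neg_mul, neg_mul]
  ring

/-- Hankel-type representation of the bivariate Mittag-Leffler function. -/
theorem mlBi_eq_hankelIntegral {α β : ℝ} (hα : 0 ≤ α) (hβ : 0 ≤ β) (ρ x y : ℝ) {θ X : ℝ}
    (h₁ : Real.pi / 2 < θ) (h₂ : θ < Real.pi) (hX : 0 ≤ X)
    (h : Real.exp (-(α * X)) * (|x| + |y|) < 1) :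
    (mlBi α β ρ x y : ℂ) = (2 * Real.pi * Complex.I)⁻¹ *
      hankelIntegral θ X fun ζ => hankelKernel (1 - ρ) ζ * (1 - mlBiSymbol α β x y ζ)⁻¹ := by
  have hpi := Real.pi_pos
  have hc : Real.cos θ < 0 := Real.cos_neg_of_pi_div_two_lt_of_lt h₁ (by linarith)
  have hsum := (hasSum_hankelIntegral_mul_pow (by linarith)
    (hankelIntegrable_hankelKernel hc X (1 - ρ)) (differentiable_mlBiSymbol α β x y).continuous h
    fun ζ hζ => norm_mlBiSymbol_le hα hβ x y hX hζ).mul_left (2 * Real.pi * Complex.I)⁻¹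
  rw [← hsum.tsum_eq, mlBi, Complex.ofReal_tsum]
  congr 1
  ext n
  simp only [hankelKernel_mul_mlBiSymbol_pow]
  rw [hankelIntegral_sum (by linarith) _ _ _ fun k _ => hankelIntegrable_hankelKernel hc X _,
    Finset.mul_sum, Complex.ofReal_sum]
  refine Finset.sum_congr rfl fun k _ => ?_
  rw [hankelIntegral_hankelKernel h₁ h₂.le, sub_sub_cancel]
  push_cast [Complex.Gamma_ofReal]
  have : (Real.Gamma (ρ + α * n + β * k) : ℂ) = Complex.Gamma (ρ + α * n + β * k) := by
    rw [← Complex.Gamma_ofReal]; push_cast; rfl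
  rw [this]
  field_simp

lemma mul_cos_half_le_norm_add {L φ : ℝ} (hL : 0 ≤ L) {γ : ℝ} (hφ : |φ| ≤ γ) (hγ : γ ≤ Real.pi)
    (u : ℝ) : L * Real.cos (γ / 2) ≤ ‖Complex.exp (u + φ * Complex.I) + L‖ := by
  have hpi := Real.pi_pos
  have hcos : Real.cos (γ / 2) ≤ Real.cos (φ / 2) := by
    rw [← Real.cos_abs (φ / 2), abs_div, abs_two]
    exact Real.cos_le_cos_of_nonneg_of_le_pi (by positivity) (by linarith) (by linarith)
  have hcos₀ : 0 ≤ Real.cos (φ / 2) :=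
    (Real.cos_nonneg_of_neg_pi_div_two_le_of_le (by linarith [abs_nonneg φ]) (by linarith)).trans
      hcos
  have hrot : ‖Complex.exp (u + φ * Complex.I) + L‖ =
      ‖Complex.exp (u + (φ / 2 : ℝ) * Complex.I) + L * Complex.exp ((-(φ / 2) : ℝ) * Complex.I)‖ := by
    rw [← one_mul ‖Complex.exp (u + φ * Complex.I) + L‖,
      ← Complex.norm_exp_ofReal_mul_I (-(φ / 2)), ← norm_mul, mul_add, ← Complex.exp_add]
    congr 2
    · congr 1; push_cast; ring
    · ring
  rw [hrot]
  refine le_trans ?_ (Complex.re_le_norm _)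
  have : (Complex.exp (u + (φ / 2 : ℝ) * Complex.I) +
      L * Complex.exp ((-(φ / 2) : ℝ) * Complex.I)).re =
      Real.exp u * Real.cos (φ / 2) + L * Real.cos (φ / 2) := by
    simp [Complex.exp_re]
  rw [this]
  nlinarith [mul_le_mul_of_nonneg_left hcos hL, mul_nonneg (Real.exp_pos u).le hcos₀]

lemma exp_mul_one_sub_mlBiSymbol (α β m L : ℝ) (ζ : ℂ) :
    Complex.exp (α * ζ) * (1 - mlBiSymbol α β (-m) (-L) ζ) =
      (Complex.exp (α * ζ) + L) + m * Complex.exp (-(β * ζ)) := by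
  have h : Complex.exp (α * ζ) * Complex.exp (-(α * ζ)) = 1 := by
    rw [← Complex.exp_add, add_neg_cancel, Complex.exp_zero]
  rw [mlBiSymbol]
  push_cast
  linear_combination (m * Complex.exp (-(β * ζ)) + L) * h

lemma le_norm_exp_mul_one_sub_mlBiSymbol {α β m L M θ : ℝ} (hα : 0 ≤ α) (hβ : 0 ≤ β)
    (hm : |m| ≤ M) (hL : 0 ≤ L) (hθ : α * θ ≤ Real.pi)
    (hML : 2 * M ≤ Real.cos (α * θ / 2) * L) {ζ : ℂ} (hζ : ζ ∈ hankelStrip θ 0) :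
    Real.cos (α * θ / 2) * L / 2 ≤
      ‖Complex.exp (α * ζ) * (1 - mlBiSymbol α β (-m) (-L) ζ)‖ := by
  have hre : 0 ≤ ζ.re := hζ.1
  have him : |ζ.im| ≤ θ := abs_le.mpr hζ.2
  rw [exp_mul_one_sub_mlBiSymbol]
  have h₁ : L * Real.cos (α * θ / 2) ≤ ‖Complex.exp (α * ζ) + L‖ := by
    have h := mul_cos_half_le_norm_add (φ := α * ζ.im) (γ := α * θ) hL
      (by rw [abs_mul, abs_of_nonneg hα]; gcongr) hθ (α * ζ.re)
    have e : (α * ζ : ℂ) = (α * ζ.re : ℝ) + (α * ζ.im : ℝ) * Complex.I := by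
      conv_lhs => rw [← Complex.re_add_im ζ]
      push_cast; ring
    rwa [← e] at h
  have h₂ : ‖m * Complex.exp (-(β * ζ))‖ ≤ M := by
    have : ‖Complex.exp (-(β * ζ))‖ ≤ 1 := by
      simp only [Complex.norm_exp, Complex.neg_re, Complex.re_ofReal_mul, Real.exp_le_one_iff]
      nlinarith [mul_nonneg hβ hre]
    rw [norm_mul, Complex.norm_real, Real.norm_eq_abs]
    exact (mul_le_of_le_one_right (abs_nonneg m) this).trans hm
  have h₃ := norm_sub_le_norm_add (Complex.exp (α * ζ) + L) (m * Complex.exp (-(β * ζ)))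
  linarith

lemma hankelIntegral_resolvent_eq {θ X : ℝ} (hX : 0 ≤ X) (hθ : 0 ≤ θ) {g h q : ℂ → ℂ} {C : ℝ}
    (hg : Differentiable ℂ g) (hq : Differentiable ℂ q) (hh : HankelIntegrable θ 0 h)
    (hne : ∀ ζ ∈ hankelStrip θ 0, 1 - q ζ ≠ 0)
    (hbound : ∀ ζ ∈ hankelStrip θ 0, ‖g ζ * (1 - q ζ)⁻¹‖ ≤ C * ‖h ζ‖) :
    hankelIntegral θ 0 (fun ζ => g ζ * (1 - q ζ)⁻¹) =
      hankelIntegral θ X fun ζ => g ζ * (1 - q ζ)⁻¹ := by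
  have hray : ∀ v : ℝ, -θ ≤ v → v ≤ θ →
      IntegrableOn (fun x : ℝ => h (x + v * Complex.I)) (Ioi 0) →
      IntegrableOn (fun x : ℝ => g (x + v * Complex.I) * (1 - q (x + v * Complex.I))⁻¹)
        (Ioi 0) := by
    intro v hv₁ hv₂ hint
    have hmem : ∀ x ∈ Ioi (0 : ℝ), (x : ℂ) + v * Complex.I ∈ hankelStrip θ 0 := fun x hx =>
      mem_hankelStrip.mpr ⟨(mem_Ioi.mp hx).le, hv₁, hv₂⟩
    refine Integrable.mono' (hint.norm.const_mul C) ?_ ?_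
    · refine ContinuousOn.aestronglyMeasurable ?_ measurableSet_Ioi
      have hg' := hg.continuous
      have hq' := hq.continuous
      refine ContinuousOn.mul (by fun_prop) (ContinuousOn.inv₀ (by fun_prop) fun x hx => ?_)
      exact hne _ (hmem x hx)
    · filter_upwards [ae_restrict_mem measurableSet_Ioi] with x hx
      exact hbound _ (hmem x hx)
  refine hankelIntegral_eq_of_differentiableOn hX ?_ (hray θ (by linarith) le_rfl hh.upper)
    (hray (-θ) le_rfl (by linarith) hh.lower)
  refine hg.differentiableOn.mul (DifferentiableOn.inv (by fun_prop) fun ζ hζ => hne ζ ?_)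
  rw [uIcc_of_le hX, uIcc_of_le (by linarith)] at hζ
  exact ⟨hζ.1.1, hζ.2⟩

lemma exists_exp_neg_mul_mul_le {α : ℝ} (hα : 0 < α) (A : ℝ) :
    ∃ X, 0 ≤ X ∧ Real.exp (-(α * X)) * A ≤ 1 / 2 := by
  have h : Tendsto (fun X : ℝ => Real.exp (-(α * X)) * A) atTop (𝓝 0) := by
    simpa using (Real.tendsto_exp_neg_atTop_nhds_zero.comp
      (tendsto_id.const_mul_atTop hα)).mul_const A
  obtain ⟨X, h₁, h₂⟩ := ((eventually_ge_atTop (0 : ℝ)).and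
    (h.eventually (eventually_le_nhds (by norm_num : (0 : ℝ) < 1 / 2)))).exists
  exact ⟨X, h₁, h₂⟩

lemma abs_le_of_ofReal_eq_inv_mul {u B : ℝ} {J : ℂ} (h : (u : ℂ) = (2 * Real.pi * Complex.I)⁻¹ * J)
    (hJ : ‖J‖ ≤ B) : |u| ≤ B := by
  rw [← Real.norm_eq_abs, ← Complex.norm_real, h, norm_mul, norm_inv]
  refine (mul_le_of_le_one_left (norm_nonneg J) (inv_le_one_of_one_le₀ ?_)).trans hJ
  simp only [norm_mul, Complex.norm_ofNat, Complex.norm_real, Complex.norm_I, mul_one,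
    Real.norm_eq_abs, abs_of_pos Real.pi_pos]
  linarith [Real.pi_gt_three]

/-- Uniform boundedness of `mlBi` on bounded sets. -/
lemma exists_abs_mlBi_le {α β : ℝ} (hα : 0 < α) (hβ : 0 ≤ β) (ρ A : ℝ) :
    ∃ C, 0 ≤ C ∧ ∀ x y : ℝ, |x| + |y| ≤ A → |mlBi α β ρ x y| ≤ C := by
  have hpi := Real.pi_pos
  obtain ⟨θ, h₁, h₂⟩ := exists_between (show Real.pi / 2 < Real.pi by linarith)
  have hc : Real.cos θ < 0 := Real.cos_neg_of_pi_div_two_lt_of_lt h₁ (by linarith)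
  obtain ⟨X, hX, hXA⟩ := exists_exp_neg_mul_mul_le hα A
  refine ⟨2 * hankelNorm θ X (hankelKernel (1 - ρ)),
    mul_nonneg two_pos.le (hankelNorm_nonneg _ _ _), fun x y hxy => ?_⟩
  have hr : Real.exp (-(α * X)) * (|x| + |y|) ≤ 1 / 2 :=
    (mul_le_mul_of_nonneg_left hxy (Real.exp_pos _).le).trans hXA
  refine abs_le_of_ofReal_eq_inv_mul
    (mlBi_eq_hankelIntegral hα.le hβ ρ x y h₁ h₂ hX (by linarith)) ?_
  refine norm_hankelIntegral_le (by linarith) (hankelIntegrable_hankelKernel hc X _)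
    fun ζ hζ => ?_
  rw [norm_mul, norm_inv, mul_comm]
  gcongr
  have hq := (norm_mlBiSymbol_le hα.le hβ x y hX hζ).trans hr
  have h := norm_sub_norm_le (1 : ℂ) (mlBiSymbol α β x y ζ)
  rw [norm_one] at h
  exact inv_le_of_inv_le₀ two_pos (by linarith)

/-- Decay of `mlBi α β ρ` along the negative second axis, locally uniform in the first variable. -/
theorem exists_abs_mlBi_neg_le_div {α β : ℝ} (hα : 0 < α) (hα₂ : α < 2) (hβ : 0 ≤ β)
    (ρ M : ℝ) :
    ∃ C > 0, ∀ m L : ℝ, |m| ≤ M → 0 < L → |mlBi α β ρ (-m) (-L)| ≤ C / L := by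
  have hpi := Real.pi_pos
  obtain ⟨θ, h₁, h₂⟩ := exists_between (show Real.pi / 2 < min Real.pi (Real.pi / α) from
    lt_min (by linarith) (div_lt_div_of_pos_left hpi hα hα₂))
  obtain ⟨h₂, h₃⟩ := lt_min_iff.mp h₂
  have hc : Real.cos θ < 0 := Real.cos_neg_of_pi_div_two_lt_of_lt h₁ (by linarith)
  have hαθ : α * θ < Real.pi := by rwa [lt_div_iff₀' hα] at h₃
  have hαθ₀ : 0 < α * θ := mul_pos hα (by linarith)
  set κ := Real.cos (α * θ / 2)
  have hκ₀ : 0 < κ := Real.cos_pos_of_mem_Ioo ⟨by linarith, by linarith⟩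
  set L₀ := 2 * |M| / κ
  have hL₀ : 0 ≤ L₀ := by positivity
  obtain ⟨C₁, hC₁, hsmall⟩ := exists_abs_mlBi_le hα hβ ρ (|M| + L₀)
  set N := hankelNorm θ 0 (hankelKernel (1 - ρ + α))
  have hN₀ : 0 ≤ N := hankelNorm_nonneg _ _ _
  refine ⟨C₁ * L₀ + 2 / κ * N + 1, by positivity, fun m L hm hL => ?_⟩
  have hm' : |m| ≤ |M| := hm.trans (le_abs_self M)
  rw [le_div_iff₀ hL]
  rcases le_total L L₀ with hLL | hLL
  · have h := hsmall (-m) (-L) (by rw [abs_neg, abs_neg, abs_of_pos hL]; linarith)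
    have : |mlBi α β ρ (-m) (-L)| * L ≤ C₁ * L₀ := by gcongr
    have : 0 ≤ 2 / κ * N := by positivity
    linarith
  · have hML : 2 * |M| ≤ κ * L := by
      rwa [div_le_iff₀' hκ₀] at hLL
    have hlow : ∀ ζ ∈ hankelStrip θ 0, κ * L / 2 ≤
        ‖Complex.exp (α * ζ) * (1 - mlBiSymbol α β (-m) (-L) ζ)‖ := fun ζ hζ =>
      le_norm_exp_mul_one_sub_mlBiSymbol hα.le hβ hm' hL.le hαθ.le hML hζ
    have hpos : 0 < κ * L / 2 := by positivity
    have hne : ∀ ζ ∈ hankelStrip θ 0, 1 - mlBiSymbol α β (-m) (-L) ζ ≠ 0 := fun ζ hζ h => by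
      have := hlow ζ hζ
      rw [h, mul_zero, norm_zero] at this
      linarith
    have hbound : ∀ ζ ∈ hankelStrip θ 0,
        ‖hankelKernel (1 - ρ) ζ * (1 - mlBiSymbol α β (-m) (-L) ζ)⁻¹‖ ≤
          2 / (κ * L) * ‖hankelKernel (1 - ρ + α) ζ‖ := by
      intro ζ hζ
      have e : hankelKernel (1 - ρ) ζ * (1 - mlBiSymbol α β (-m) (-L) ζ)⁻¹ =
          (Complex.exp (α * ζ) * (1 - mlBiSymbol α β (-m) (-L) ζ))⁻¹ *
            hankelKernel (1 - ρ + α) ζ := by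
        rw [hankelKernel_add]
        have := hne ζ hζ
        have := Complex.exp_ne_zero (α * ζ)
        field_simp
      rw [e, norm_mul, norm_inv, ← inv_div]
      gcongr
      exact hlow ζ hζ
    obtain ⟨X, hX, hXA⟩ := exists_exp_neg_mul_mul_le hα (|-m| + |-L|)
    have hrep := mlBi_eq_hankelIntegral hα.le hβ ρ (-m) (-L) h₁ h₂ hX (by linarith)
    have hint := hankelIntegrable_hankelKernel hc 0 (1 - ρ + α)
    rw [← hankelIntegral_resolvent_eq hX (by linarith) (differentiable_hankelKernel _)
      (differentiable_mlBiSymbol α β (-m) (-L)) hint hne hbound] at hrep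
    have h := abs_le_of_ofReal_eq_inv_mul hrep
      (norm_hankelIntegral_le (by linarith) hint hbound)
    have e : 2 / (κ * L) * N * L = 2 / κ * N := by field_simp
    have := mul_le_mul_of_nonneg_right h hL.le
    rw [e] at this
    have : 0 ≤ C₁ * L₀ := by positivity
    linarith

end Hankel

/-- For `1 < α₁ < 2`, `0 < α₂ < α₁`, `ρ > 0`, `μ > 0`, `T > 0`, there is `c > 0`
(depending only on `α₁, α₂, ρ, μ, T`) such that for every `t ∈ (0,T]` and every `λ > 0`,
`|E_{(α₁−α₂,α₁),ρ}(−μ t^{α₁−α₂}, −λ t^{α₁})| ≤ c/(λ t^{α₁})`. -/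
theorem mlBi_lambda_estimate (α₁ α₂ ρ μ T : ℝ) (hα₁ : 1 < α₁) (hα₁' : α₁ < 2)
    (hα₂ : 0 < α₂) (hα₂' : α₂ < α₁) (hρ : 0 < ρ) (hμ : 0 < μ) (hT : 0 < T) :
    ∃ c > 0, ∀ t : ℝ, 0 < t → t ≤ T → ∀ lam : ℝ, 0 < lam →
      |mlBi (α₁ - α₂) α₁ ρ (-(μ * t ^ (α₁ - α₂))) (-(lam * t ^ α₁))| ≤ c / (lam * t ^ α₁) := by
  obtain ⟨c, hc, h⟩ := exists_abs_mlBi_neg_le_div (α := α₁ - α₂) (β := α₁) (by linarith)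
    (by linarith) (by linarith) ρ (μ * T ^ (α₁ - α₂))
  refine ⟨c, hc, fun t ht htT lam hlam => h _ _ ?_ (by positivity)⟩
  rw [abs_of_nonneg (by positivity)]
  have : 0 ≤ α₁ - α₂ := by linarith
  gcongr
end

section
/- If 1 < β ≤ 4/3, then E_{β,2}(−z) > 0 for every z > 0; in particular, the function z ↦ E_{β,2}(−z) has no zeros on (0,∞). -/
/-- The two-parameter Mittag-Leffler function (real arguments)
`E_{α,β}(z) = ∑_{k=0}^∞ z^k / Γ(αk + β)`. -/
noncomputable def mlReal (α β z : ℝ) : ℝ :=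
  ∑' k : ℕ, z ^ k / Real.Gamma (α * k + β)

open Filter Topology Finset MeasureTheory

/-- The Taylor coefficients of `(1 - x) ^ (-ρ)`. -/
noncomputable def risingCoeff (ρ : ℝ) (n : ℕ) : ℝ :=
  (∏ j ∈ range n, (ρ + j)) / n.factorial

lemma risingCoeff_zero_right (ρ : ℝ) : risingCoeff ρ 0 = 1 := by simp [risingCoeff]

lemma risingCoeff_succ (ρ : ℝ) (n : ℕ) :
    risingCoeff ρ (n + 1) = risingCoeff ρ n * ((ρ + n) / (n + 1)) := by
  have : ((n.factorial : ℕ) : ℝ) ≠ 0 := by positivity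
  rw [risingCoeff, risingCoeff, prod_range_succ, Nat.factorial_succ]
  push_cast
  field_simp

lemma risingCoeff_zero_left (n : ℕ) : risingCoeff 0 (n + 1) = 0 := by
  simp [risingCoeff, prod_range_succ']

lemma risingCoeff_eq_choose (ρ : ℝ) (n : ℕ) :
    risingCoeff ρ n = (-1) ^ n * Ring.choose (-ρ) n := by
  have h : ∀ n : ℕ, (descPochhammer ℝ n).eval (-ρ) = (-1) ^ n * ∏ j ∈ range n, (ρ + j) := by
    intro n
    induction n with
    | zero => simp
    | succ n ih =>
      rw [descPochhammer_succ_eval, ih, prod_range_succ, pow_succ]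
      ring
  have h2 := Ring.descPochhammer_eq_factorial_smul_choose (-ρ) n
  rw [← Polynomial.aeval_eq_smeval, Polynomial.aeval_def, Polynomial.eval₂_eq_eval_map,
    descPochhammer_map, h, nsmul_eq_mul] at h2
  have : ((n.factorial : ℕ) : ℝ) ≠ 0 := by positivity
  rw [risingCoeff, div_eq_iff this, mul_assoc, mul_comm (Ring.choose _ _), ← h2, ← mul_assoc,
    ← mul_pow]
  simp

lemma sum_risingCoeff_mul (x y : ℝ) (n : ℕ) :
    ∑ ij ∈ antidiagonal n, risingCoeff x ij.1 * risingCoeff y ij.2 = risingCoeff (x + y) n := by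
  rw [risingCoeff_eq_choose, neg_add, Ring.add_choose_eq n (Commute.all _ _), mul_sum]
  refine sum_congr rfl fun ij hij => ?_
  rw [HasAntidiagonal.mem_antidiagonal] at hij
  rw [risingCoeff_eq_choose, risingCoeff_eq_choose, ← hij, pow_add]
  ring

lemma risingCoeff_nonneg {ρ : ℝ} (hρ : 0 ≤ ρ) (n : ℕ) : 0 ≤ risingCoeff ρ n := by
  unfold risingCoeff
  exact div_nonneg (prod_nonneg fun j _ => by positivity) (by positivity)

lemma risingCoeff_neg_nonpos {α : ℝ} (h0 : 0 ≤ α) (h1 : α ≤ 1) (n : ℕ) :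
    risingCoeff (-α) (n + 1) ≤ 0 := by
  induction n with
  | zero => simp [risingCoeff, h0]
  | succ n ih =>
    rw [risingCoeff_succ]
    refine mul_nonpos_of_nonpos_of_nonneg ih (div_nonneg ?_ (by positivity))
    push_cast
    linarith [(n.cast_nonneg : (0 : ℝ) ≤ n)]

lemma risingCoeff_le {ρ : ℝ} (hρ : 0 ≤ ρ) (n : ℕ) : risingCoeff ρ n ≤ (ρ + n) ^ n := by
  unfold risingCoeff
  have h : (1 : ℝ) ≤ n.factorial := by exact_mod_cast n.factorial_pos
  refine (div_le_self (prod_nonneg fun j _ => by positivity) h).trans ?_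
  calc ∏ j ∈ range n, (ρ + j) ≤ ∏ _j ∈ range n, (ρ + n) := by
        refine prod_le_prod (fun j _ => by positivity) fun j hj => ?_
        have : (j : ℝ) ≤ n := by exact_mod_cast (mem_range.1 hj).le
        linarith
    _ = (ρ + n) ^ n := by simp

lemma tendsto_risingCoeff_mul_rpow {ρ : ℝ} (hρ : 0 < ρ) :
    Tendsto (fun n : ℕ => risingCoeff ρ n * (n : ℝ) ^ (1 - ρ)) atTop (𝓝 (Real.Gamma ρ)⁻¹) := by
  have h1 : Tendsto (fun n : ℕ => (n : ℝ) / (n + ρ)) atTop (𝓝 1) :=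
    tendsto_natCast_div_add_atTop ρ
  have h2 := h1.mul ((Real.GammaSeq_tendsto_Gamma ρ).inv₀ (Real.Gamma_pos_of_pos hρ).ne')
  rw [one_mul] at h2
  refine h2.congr' ?_
  filter_upwards [eventually_gt_atTop 0] with n hn
  have hn' : (0 : ℝ) < n := by exact_mod_cast hn
  have hf : (0 : ℝ) < n.factorial := by positivity
  have hp : 0 < ∏ j ∈ range n, (ρ + (j : ℝ)) := prod_pos fun j _ => by positivity
  rw [risingCoeff, Real.GammaSeq, prod_range_succ, Real.rpow_sub hn', Real.rpow_one]
  have : (0 : ℝ) < (n : ℝ) ^ ρ := by positivity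
  field_simp
  ring

lemma risingCoeff_mul_rpow_antitone {ρ : ℝ} (hρ : 1 ≤ ρ) {m n : ℕ} (hm : 1 ≤ m) (hmn : m ≤ n) :
    risingCoeff ρ n * (n : ℝ) ^ (1 - ρ) ≤ risingCoeff ρ m * (m : ℝ) ^ (1 - ρ) := by
  induction n, hmn using Nat.le_induction with
  | base => exact le_rfl
  | succ n hmn ih =>
    refine le_trans ?_ ih
    have hn : (0 : ℝ) < n := by exact_mod_cast (by lia : 0 < n)
    rw [risingCoeff_succ, mul_assoc]
    refine mul_le_mul_of_nonneg_left ?_ (risingCoeff_nonneg (by linarith) n)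
    push_cast
    have hlog : 1 / ((n : ℝ) + 1) ≤ Real.log ((n + 1) / n) := by
      have := Real.one_sub_inv_le_log_of_pos (x := ((n : ℝ) + 1) / n) (by positivity)
      refine le_trans (le_of_eq ?_) this
      field_simp
      ring
    have h1 : (ρ + n) / ((n : ℝ) + 1) ≤ ((n + 1) / n : ℝ) ^ (ρ - 1) := by
      rw [Real.rpow_def_of_pos (by positivity)]
      refine le_trans ?_ (Real.add_one_le_exp _)
      have : (ρ + n) / ((n : ℝ) + 1) = 1 / ((n : ℝ) + 1) * (ρ - 1) + 1 := by
        field_simp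
        ring
      rw [this]
      gcongr
    calc (ρ + n) / ((n : ℝ) + 1) * ((n : ℝ) + 1) ^ (1 - ρ)
        ≤ ((n + 1) / n : ℝ) ^ (ρ - 1) * ((n : ℝ) + 1) ^ (1 - ρ) := by gcongr
      _ = (n : ℝ) ^ (1 - ρ) := by
        have e : 1 - ρ = -(ρ - 1) := by ring
        rw [e, Real.div_rpow (by positivity) hn.le, Real.rpow_neg (by positivity),
          Real.rpow_neg hn.le]
        have : (0 : ℝ) < ((n : ℝ) + 1) ^ (ρ - 1) := by positivity
        field_simp

lemma inv_Gamma_le {ρ : ℝ} (hρ : 1 ≤ ρ) {m : ℕ} (hm : 1 ≤ m) :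
    (Real.Gamma ρ)⁻¹ ≤ risingCoeff ρ m * (m : ℝ) ^ (1 - ρ) := by
  refine le_of_tendsto (tendsto_risingCoeff_mul_rpow (by linarith)) ?_
  filter_upwards [eventually_ge_atTop m] with n hn
  exact risingCoeff_mul_rpow_antitone hρ hm hn

lemma summable_rpow_mul_risingCoeff {β δ a : ℝ} (hβ : 0 < β) (hδ : 0 ≤ δ) (ha : 1 < a) (n : ℕ) :
    Summable fun m : ℕ => a ^ (-(β * m + δ)) * risingCoeff (β * m + δ) n := by
  have ha0 : 0 < a := by linarith
  have hr : a ^ (-β) < 1 := Real.rpow_lt_one_of_one_lt_of_neg ha (by linarith)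
  have hr0 : 0 < a ^ (-β) := by positivity
  have hs : Summable fun m : ℕ => ((m : ℝ) + 1) ^ n * (a ^ (-β)) ^ (m + 1) := by
    have := summable_pow_mul_geometric_of_norm_lt_one (R := ℝ) n
      (r := a ^ (-β)) (by rwa [Real.norm_eq_abs, abs_of_pos hr0])
    simpa using (summable_nat_add_iff 1).2 this
  refine Summable.of_nonneg_of_le (fun m => ?_) (fun m => ?_)
    (hs.mul_left (a ^ (-δ + β) * (β + δ + n) ^ n))
  · exact mul_nonneg (by positivity) (risingCoeff_nonneg (by positivity) n)
  · have h1 : risingCoeff (β * m + δ) n ≤ (β + δ + n) ^ n * ((m : ℝ) + 1) ^ n := by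
      refine (risingCoeff_le (by positivity) n).trans ?_
      rw [← mul_pow]
      refine pow_le_pow_left₀ (by positivity) ?_ n
      have : (0 : ℝ) ≤ m * (δ + n) := by positivity
      nlinarith
    have h2 : a ^ (-(β * m + δ)) = a ^ (-δ + β) * (a ^ (-β)) ^ (m + 1) := by
      rw [← Real.rpow_natCast, ← Real.rpow_mul ha0.le, ← Real.rpow_add ha0]
      congr 1
      push_cast
      ring
    rw [h2]
    calc a ^ (-δ + β) * (a ^ (-β)) ^ (m + 1) * risingCoeff (β * m + δ) n
        ≤ a ^ (-δ + β) * (a ^ (-β)) ^ (m + 1) * ((β + δ + n) ^ n * ((m : ℝ) + 1) ^ n) := by gcongr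
      _ = _ := by ring

/-- The Taylor coefficients of `s ^ (β - δ) / (s ^ β + 1)` at `s = a (1 - x)`. -/
noncomputable def mlCoeff (β a δ : ℝ) (n : ℕ) : ℝ :=
  ∑' m : ℕ, (-1) ^ m * (a ^ (-(β * m + δ)) * risingCoeff (β * m + δ) n)

lemma summable_mlCoeff {β δ a : ℝ} (hβ : 0 < β) (hδ : 0 ≤ δ) (ha : 1 < a) (n : ℕ) :
    Summable fun m : ℕ => (-1) ^ m * (a ^ (-(β * m + δ)) * risingCoeff (β * m + δ) n) := by
  refine Summable.of_norm ?_
  simpa [abs_mul] using (summable_rpow_mul_risingCoeff hβ hδ ha n).norm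

lemma mlCoeff_add_mlCoeff {β δ a : ℝ} (hβ : 0 < β) (hδ : 0 ≤ δ) (ha : 1 < a) (n : ℕ) :
    mlCoeff β a δ n + mlCoeff β a (δ + β) n = a ^ (-δ) * risingCoeff δ n := by
  rw [mlCoeff, (summable_mlCoeff hβ hδ ha n).tsum_eq_zero_add, mlCoeff, add_assoc,
    ← Summable.tsum_add]
  · have : ∀ m : ℕ, (-1 : ℝ) ^ (m + 1) *
        (a ^ (-(β * (m + 1 : ℕ) + δ)) * risingCoeff (β * (m + 1 : ℕ) + δ) n) +
        (-1) ^ m * (a ^ (-(β * m + (δ + β))) * risingCoeff (β * m + (δ + β)) n) = 0 := by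
      intro m
      have e : β * (m + 1 : ℕ) + δ = β * m + (δ + β) := by push_cast; ring
      rw [e]
      ring
    rw [tsum_congr this, tsum_zero]
    simp
  · exact (summable_nat_add_iff 1).2 (summable_mlCoeff hβ hδ ha n)
  · exact summable_mlCoeff hβ (by linarith) ha n

lemma sum_risingCoeff_mul_mlCoeff {α β δ a : ℝ} (hβ : 0 < β) (hδ : 0 ≤ δ) (ha : 1 < a) (n : ℕ) :
    ∑ ij ∈ antidiagonal n, risingCoeff (-α) ij.1 * mlCoeff β a δ ij.2 =
      a ^ (-α) * mlCoeff β a (δ - α) n := by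
  have ha0 : 0 < a := by linarith
  have hs : ∀ ij ∈ antidiagonal n, Summable fun m : ℕ => risingCoeff (-α) ij.1 *
      ((-1) ^ m * (a ^ (-(β * m + δ)) * risingCoeff (β * m + δ) ij.2)) :=
    fun ij _ => (summable_mlCoeff hβ hδ ha ij.2).mul_left _
  unfold mlCoeff
  simp only [← tsum_mul_left]
  rw [← Summable.tsum_finsetSum hs]
  refine tsum_congr fun m => ?_
  have e : β * m + (δ - α) = -α + (β * m + δ) := by ring
  have e2 : a ^ (-(β * m + δ)) = a ^ (-α) * a ^ (-(-α + (β * m + δ))) := by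
    rw [← Real.rpow_add ha0]
    congr 1
    ring
  rw [e, ← sum_risingCoeff_mul, mul_sum, mul_sum, mul_sum, e2]
  refine sum_congr rfl fun ij _ => ?_
  ring

lemma norm_mlCoeff_le {α a : ℝ} (h0 : 0 < α) (h1 : α ≤ 1) (ha : 1 < a) (n : ℕ) :
    ‖(mlCoeff (2 * α) a α n - mlCoeff (2 * α) a (2 * α) n * Complex.I : ℂ)‖ ≤
      a ^ (-α) * risingCoeff α n := by
  have ha0 : 0 < a := by linarith
  have hβ : 0 < 2 * α := by linarith
  have hc : (1 : ℝ) ≤ ‖(1 + (a ^ (-α) : ℝ) * Complex.I : ℂ)‖ := by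
    simpa using Complex.abs_re_le_norm (1 + (a ^ (-α) : ℝ) * Complex.I : ℂ)
  set Y : ℕ → ℂ := fun n => mlCoeff (2 * α) a α n - mlCoeff (2 * α) a (2 * α) n * Complex.I with hY
  have hconv : ∀ n, ∑ ij ∈ antidiagonal n, (risingCoeff (-α) ij.1 : ℂ) * Y ij.2 =
      (a ^ (-α) : ℝ) * (risingCoeff 0 n - Complex.I * Y n) := by
    intro n
    have e1 := sum_risingCoeff_mul_mlCoeff (α := α) hβ h0.le ha n
    have e2 := sum_risingCoeff_mul_mlCoeff (α := α) hβ hβ.le ha n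
    have e3 := mlCoeff_add_mlCoeff hβ le_rfl ha n
    rw [neg_zero, Real.rpow_zero, one_mul, zero_add] at e3
    rw [sub_self] at e1
    rw [show 2 * α - α = α by ring] at e2
    have e4 : mlCoeff (2 * α) a 0 n = risingCoeff 0 n - mlCoeff (2 * α) a (2 * α) n := by linarith
    rw [e4] at e1
    have e1' := congrArg (fun x : ℝ => (x : ℂ)) e1
    have e2' := congrArg (fun x : ℝ => (x : ℂ)) e2
    push_cast at e1' e2'
    simp only [hY, mul_sub, sum_sub_distrib, ← mul_assoc, ← sum_mul]
    rw [e1', e2']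
    linear_combination (- (a ^ (-α) : ℝ) * mlCoeff (2 * α) a (2 * α) n : ℂ) * Complex.I_sq
  change ‖Y n‖ ≤ _
  induction n using Nat.strong_induction_on with
  | _ n ih =>
    have hle : ‖Y n‖ ≤ ‖(1 + (a ^ (-α) : ℝ) * Complex.I : ℂ) * Y n‖ := by
      rw [norm_mul]
      exact le_mul_of_one_le_left (norm_nonneg _) hc
    refine hle.trans ?_
    cases n with
    | zero =>
      have := hconv 0
      simp only [Nat.antidiagonal_zero, sum_singleton, risingCoeff_zero_right, Complex.ofReal_one,
        one_mul] at this
      have e : (1 + (a ^ (-α) : ℝ) * Complex.I : ℂ) * Y 0 = (a ^ (-α) : ℝ) := by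
        linear_combination this
      rw [e, risingCoeff_zero_right, mul_one, Complex.norm_real, Real.norm_eq_abs,
        abs_of_pos (by positivity)]
    | succ n =>
      have h2 := hconv (n + 1)
      rw [Nat.sum_antidiagonal_succ, risingCoeff_zero_right, risingCoeff_zero_left] at h2
      have e : (1 + (a ^ (-α) : ℝ) * Complex.I : ℂ) * Y (n + 1) =
          ∑ ij ∈ antidiagonal n, (-risingCoeff (-α) (ij.1 + 1) : ℝ) * Y ij.2 := by
        push_cast at h2 ⊢
        simp only [neg_mul, sum_neg_distrib]
        linear_combination h2
      have h3 := sum_risingCoeff_mul (-α) α (n + 1)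
      rw [Nat.sum_antidiagonal_succ, risingCoeff_zero_right, neg_add_cancel,
        risingCoeff_zero_left] at h3
      have e3 : risingCoeff α (n + 1) =
          ∑ ij ∈ antidiagonal n, (-risingCoeff (-α) (ij.1 + 1)) * risingCoeff α ij.2 := by
        simp only [neg_mul, sum_neg_distrib]
        linarith
      rw [e, e3, mul_sum]
      refine (norm_sum_le _ _).trans (sum_le_sum fun ij hij => ?_)
      have hlt : ij.2 < n + 1 := by
        have := HasAntidiagonal.mem_antidiagonal.1 hij
        lia
      have hq := risingCoeff_neg_nonpos h0.le h1 ij.1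
      rw [norm_mul, Complex.norm_real, Real.norm_eq_abs, abs_of_nonneg (by linarith),
        mul_left_comm]
      exact mul_le_mul_of_nonneg_left (ih _ hlt) (by linarith)

lemma mlCoeff_sq_add_sq_le {α a : ℝ} (h0 : 0 < α) (h1 : α ≤ 1) (ha : 1 < a) (n : ℕ) :
    (a ^ (-α) * risingCoeff α n - mlCoeff (2 * α) a (3 * α) n) ^ 2 +
      mlCoeff (2 * α) a (2 * α) n ^ 2 ≤ (a ^ (-α) * risingCoeff α n) ^ 2 := by
  have h := norm_mlCoeff_le h0 h1 ha n
  have h2 := mlCoeff_add_mlCoeff (by linarith : 0 < 2 * α) h0.le ha n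
  rw [show α + 2 * α = 3 * α by ring] at h2
  rw [← h2, add_sub_cancel_right, h2]
  have h3 := pow_le_pow_left₀ (norm_nonneg _) h 2
  rw [Complex.sq_norm, Complex.normSq_apply] at h3
  simp at h3
  simpa [sq] using h3

lemma mul_rpow_neg_div {n t ρ x : ℝ} (hn : 0 < n) (ht : 0 < t) :
    n / t * ((n / t) ^ (-ρ) * x) = t ^ (ρ - 1) * (x * n ^ (1 - ρ)) := by
  have e : n / t * (n / t) ^ (-ρ) = (n / t) ^ (1 - ρ) := by
    rw [sub_eq_add_neg, Real.rpow_add (by positivity), Real.rpow_one]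
  rw [← mul_assoc, e, Real.div_rpow hn.le ht.le, show ρ - 1 = -(1 - ρ) by ring,
    Real.rpow_neg ht.le]
  ring

/-- Post–Widder inversion for the Mittag-Leffler function. -/
lemma tendsto_mlCoeff {β δ t : ℝ} (hβ : 0 < β) (hδ : 1 ≤ δ) (ht : 0 < t) :
    Tendsto (fun n : ℕ => n / t * mlCoeff β (n / t) δ n) atTop
      (𝓝 (t ^ (δ - 1) * mlReal β δ (-t ^ β))) := by
  obtain ⟨n₀, hn₀⟩ := exists_nat_gt (max t 1)
  have hn₀t : t < n₀ := (le_max_left _ _).trans_lt hn₀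
  have hn₀1 : 1 < n₀ := by exact_mod_cast (le_max_right _ _).trans_lt hn₀
  have hn₀0 : (0 : ℝ) < n₀ := ht.trans hn₀t
  simp only [mlCoeff, mlReal, ← tsum_mul_left]
  have hρ : ∀ k : ℕ, 1 ≤ β * k + δ := fun k => by
    have : 0 ≤ β * k := by positivity
    linarith
  refine tendsto_tsum_of_dominated_convergence
    (bound := fun k : ℕ => n₀ / t * ((n₀ / t) ^ (-(β * k + δ)) * risingCoeff (β * k + δ) n₀))
    ((summable_rpow_mul_risingCoeff hβ (by linarith) ((one_lt_div ht).2 hn₀t) n₀).mul_left _)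
    (fun k => ?_) ?_
  · have h := (tendsto_risingCoeff_mul_rpow (by linarith [hρ k] : 0 < β * k + δ)).const_mul
      ((-1) ^ k * t ^ (β * k + δ - 1))
    have e : (-1 : ℝ) ^ k * t ^ (β * k + δ - 1) * (Real.Gamma (β * k + δ))⁻¹ =
        t ^ (δ - 1) * ((-t ^ β) ^ k / Real.Gamma (β * k + δ)) := by
      rw [neg_pow (t ^ β), ← Real.rpow_natCast (t ^ β), ← Real.rpow_mul ht.le,
        show β * k + δ - 1 = (δ - 1) + β * k by ring, Real.rpow_add ht]
      ring
    rw [e] at h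
    refine h.congr' ?_
    filter_upwards [eventually_gt_atTop 0] with n hn
    have hn' : (0 : ℝ) < n := by exact_mod_cast hn
    rw [mul_left_comm (_ / _), mul_rpow_neg_div hn' ht, mul_assoc]
  · filter_upwards [eventually_ge_atTop n₀] with n hn k
    have hn' : (0 : ℝ) < n := hn₀0.trans_le (by exact_mod_cast hn)
    rw [mul_left_comm, mul_rpow_neg_div hn' ht, mul_rpow_neg_div hn₀0 ht, norm_mul, norm_pow,
      norm_neg, norm_one, one_pow, one_mul, Real.norm_of_nonneg]
    · exact mul_le_mul_of_nonneg_left (risingCoeff_mul_rpow_antitone (hρ k) hn₀1.le hn)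
        (by positivity)
    · have := risingCoeff_nonneg (by linarith [hρ k] : 0 ≤ β * k + δ) n
      positivity

lemma mlReal_sq_add_sq_le {α t : ℝ} (h0 : 1 / 2 ≤ α) (h1 : α ≤ 1) (ht : 0 < t) :
    (t ^ (α - 1) * (Real.Gamma α)⁻¹ - t ^ (3 * α - 1) * mlReal (2 * α) (3 * α) (-t ^ (2 * α))) ^ 2
      + (t ^ (2 * α - 1) * mlReal (2 * α) (2 * α) (-t ^ (2 * α))) ^ 2
      ≤ (t ^ (α - 1) * (Real.Gamma α)⁻¹) ^ 2 := by
  have hP : Tendsto (fun n : ℕ => n / t * ((n / t) ^ (-α) * risingCoeff α n)) atTop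
      (𝓝 (t ^ (α - 1) * (Real.Gamma α)⁻¹)) := by
    refine ((tendsto_risingCoeff_mul_rpow (by linarith : 0 < α)).const_mul _).congr' ?_
    filter_upwards [eventually_gt_atTop 0] with n hn
    rw [mul_rpow_neg_div (by exact_mod_cast hn) ht]
  have hU := tendsto_mlCoeff (by linarith : 0 < 2 * α) (by linarith : 1 ≤ 3 * α) ht
  have hB := tendsto_mlCoeff (by linarith : 0 < 2 * α) (by linarith : 1 ≤ 2 * α) ht
  refine le_of_tendsto_of_tendsto (((hP.sub hU).pow 2).add (hB.pow 2)) (hP.pow 2) ?_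
  obtain ⟨n₀, hn₀⟩ := exists_nat_gt t
  filter_upwards [eventually_ge_atTop n₀] with n hn
  have hn' : t < n := hn₀.trans_le (by exact_mod_cast hn)
  have := mlCoeff_sq_add_sq_le (by linarith) h1 ((one_lt_div ht).2 hn') n
  rw [← mul_sub, mul_pow, mul_pow, mul_pow, ← mul_add]
  exact mul_le_mul_of_nonneg_left this (sq_nonneg _)

lemma summable_rpow_mul_inv_Gamma {β δ t : ℝ} (hβ : 0 < β) (hδ : 0 < δ) (ht : 0 < t) :
    Summable fun k : ℕ => t ^ (β * k + δ - 1) * (Real.Gamma (β * k + δ))⁻¹ := by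
  obtain ⟨N, hN⟩ := exists_nat_ge (1 / β)
  rw [div_le_iff₀ hβ] at hN
  rw [← summable_nat_add_iff N]
  obtain ⟨n₀, hn₀⟩ := exists_nat_gt (max t 1)
  have hn₀t : t < n₀ := (le_max_left _ _).trans_lt hn₀
  have hn₀1 : 1 < n₀ := by exact_mod_cast (le_max_right _ _).trans_lt hn₀
  have hn₀0 : (0 : ℝ) < n₀ := ht.trans hn₀t
  have e : ∀ k : ℕ, β * (k + N : ℕ) + δ = β * k + (β * N + δ) := fun k => by push_cast; ring
  have hρ : ∀ k : ℕ, 1 ≤ β * k + (β * N + δ) := fun k => by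
    have : 0 ≤ β * k := by positivity
    linarith
  refine Summable.of_nonneg_of_le (fun k => ?_) (fun k => ?_)
    ((summable_rpow_mul_risingCoeff (δ := β * N + δ) hβ (by positivity)
      ((one_lt_div ht).2 hn₀t) n₀).mul_left (n₀ / t))
  · have := (Real.Gamma_pos_of_pos (by rw [e]; linarith [hρ k] : 0 < β * (k + N : ℕ) + δ)).le
    positivity
  · rw [e, mul_rpow_neg_div hn₀0 ht]
    exact mul_le_mul_of_nonneg_left (inv_Gamma_le (hρ k) hn₀1.le) (by positivity)

lemma summable_pow_div_Gamma {β δ r : ℝ} (hβ : 0 < β) (hδ : 0 < δ) (hr : 0 < r) :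
    Summable fun k : ℕ => r ^ k / Real.Gamma (β * k + δ) := by
  have ht : 0 < r ^ (1 / β) := by positivity
  refine ((summable_rpow_mul_inv_Gamma hβ hδ ht).mul_left ((r ^ (1 / β)) ^ (1 - δ))).congr
    fun k => ?_
  rw [← mul_assoc, ← Real.rpow_add ht, ← Real.rpow_mul hr.le, ← Real.rpow_natCast r k,
    div_eq_mul_inv]
  congr 2
  field_simp
  ring

lemma continuous_mlReal {β δ : ℝ} (hβ : 0 < β) (hδ : 0 < δ) : Continuous (mlReal β δ) := by
  rw [continuous_iff_continuousAt]
  intro x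
  have h : ContinuousOn (mlReal β δ) (Metric.ball 0 (|x| + 1)) := by
    refine continuousOn_tsum (fun k => by fun_prop)
      (summable_pow_div_Gamma hβ hδ (by positivity : 0 < |x| + 1)) fun k y hy => ?_
    have hG := Real.Gamma_pos_of_pos (by positivity : 0 < β * k + δ)
    rw [norm_div, norm_pow, Real.norm_of_nonneg hG.le]
    have := (mem_ball_zero_iff.1 hy).le
    gcongr
  exact h.continuousAt (Metric.isOpen_ball.mem_nhds (by simp))

lemma mlReal_zero_right (β δ : ℝ) : mlReal β δ 0 = (Real.Gamma δ)⁻¹ := by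
  rw [mlReal, tsum_eq_single 0 fun k hk => by simp [hk]]
  simp

/-- The function `t ^ (δ - 1) E_{β,δ}(-t ^ β)`, with Laplace transform
`s ^ (β - δ) / (s ^ β + 1)`. -/
noncomputable def mlKernel (β δ t : ℝ) : ℝ := t ^ (δ - 1) * mlReal β δ (-t ^ β)

lemma mlKernel_eq_tsum {β δ t : ℝ} (ht : 0 < t) :
    mlKernel β δ t = ∑' k : ℕ, (-1) ^ k * (t ^ (β * k + δ - 1) * (Real.Gamma (β * k + δ))⁻¹) := by
  rw [mlKernel, mlReal, ← tsum_mul_left]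
  refine tsum_congr fun k => ?_
  rw [neg_pow (t ^ β), ← Real.rpow_natCast (t ^ β), ← Real.rpow_mul ht.le,
    show β * k + δ - 1 = (δ - 1) + β * k by ring, Real.rpow_add ht]
  ring

lemma continuous_mlReal_neg_rpow {β δ : ℝ} (hβ : 0 < β) (hδ : 0 < δ) :
    Continuous fun t : ℝ => mlReal β δ (-t ^ β) :=
  (continuous_mlReal hβ hδ).comp (Real.continuous_rpow_const hβ.le).neg

lemma continuousAt_mlKernel {β δ t : ℝ} (hβ : 0 < β) (hδ : 0 < δ) (ht : t ≠ 0) :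
    ContinuousAt (mlKernel β δ) t :=
  (Real.continuousAt_rpow_const _ _ (Or.inl ht)).mul
    (continuous_mlReal_neg_rpow hβ hδ).continuousAt

lemma continuous_mlKernel {β δ : ℝ} (hβ : 0 < β) (hδ : 1 ≤ δ) : Continuous (mlKernel β δ) :=
  (Real.continuous_rpow_const (by linarith)).mul (continuous_mlReal_neg_rpow hβ (by linarith))

lemma stronglyMeasurable_mlKernel {β δ : ℝ} (hβ : 0 < β) (hδ : 0 < δ) :
    StronglyMeasurable (mlKernel β δ) :=
  ((measurable_id.pow_const _).mul (continuous_mlReal_neg_rpow hβ hδ).measurable).stronglyMeasurable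

lemma mlKernel_eventually_pos {β δ : ℝ} (hβ : 0 < β) (hδ : 0 < δ) :
    ∀ᶠ t in 𝓝[>] 0, 0 < mlKernel β δ t := by
  have h := (continuous_mlReal_neg_rpow hβ hδ).tendsto 0
  rw [Real.zero_rpow hβ.ne', neg_zero, mlReal_zero_right] at h
  have h2 := h.eventually (lt_mem_nhds (inv_pos.2 (Real.Gamma_pos_of_pos hδ)))
  filter_upwards [h2.filter_mono nhdsWithin_le_nhds, self_mem_nhdsWithin] with t h3 ht
  have : (0 : ℝ) < t := ht
  exact mul_pos (by positivity) h3

lemma integral_sub_rpow_mul_rpow {σ ρ t : ℝ} (hσ : 0 < σ) (hρ : 0 < ρ) (ht : 0 < t) :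
    ∫ s in (0 : ℝ)..t, (t - s) ^ (σ - 1) * s ^ (ρ - 1) =
      t ^ (ρ + σ - 1) * (Real.Gamma ρ * Real.Gamma σ / Real.Gamma (ρ + σ)) := by
  have h := Complex.betaIntegral_scaled ρ σ ht
  rw [Complex.betaIntegral_eq_Gamma_mul_div _ _ (by simpa) (by simpa)] at h
  have h2 : ∫ s in (0 : ℝ)..t, (s : ℂ) ^ ((ρ : ℂ) - 1) * ((t : ℂ) - s) ^ ((σ : ℂ) - 1) =
      ∫ s in (0 : ℝ)..t, (((t - s) ^ (σ - 1) * s ^ (ρ - 1) : ℝ) : ℂ) := by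
    refine intervalIntegral.integral_congr fun s hs => ?_
    rw [Set.uIcc_of_le ht.le] at hs
    have h1 := Complex.ofReal_cpow hs.1 (ρ - 1)
    have h2 := Complex.ofReal_cpow (sub_nonneg.2 hs.2) (σ - 1)
    push_cast at h1 h2 ⊢
    rw [h1, h2, mul_comm]
  rw [h2, intervalIntegral.integral_ofReal] at h
  have h3 := Complex.ofReal_cpow ht.le (ρ + σ - 1)
  push_cast at h3
  rw [← h3, ← Complex.ofReal_add, Complex.Gamma_ofReal, Complex.Gamma_ofReal,
    Complex.Gamma_ofReal] at h
  exact_mod_cast h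

lemma intervalIntegrable_sub_rpow_mul_rpow {σ ρ t : ℝ} (hσ : 0 < σ) (hρ : 0 < ρ) (ht : 0 < t) :
    IntervalIntegrable (fun s => (t - s) ^ (σ - 1) * s ^ (ρ - 1)) volume 0 t := by
  by_contra hc
  have h := integral_sub_rpow_mul_rpow hσ hρ ht
  rw [intervalIntegral.integral_undef hc] at h
  have := Real.Gamma_pos_of_pos hσ
  have := Real.Gamma_pos_of_pos hρ
  have := Real.Gamma_pos_of_pos (add_pos hρ hσ)
  have : 0 < t ^ (ρ + σ - 1) * (Real.Gamma ρ * Real.Gamma σ / Real.Gamma (ρ + σ)) := by positivity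
  linarith

lemma intervalIntegrable_sub_rpow_mul_mlKernel {β δ σ t : ℝ} (hβ : 0 < β) (hδ : 0 < δ)
    (hσ : 0 < σ) (ht : 0 < t) :
    IntervalIntegrable (fun s => (t - s) ^ (σ - 1) * mlKernel β δ s) volume 0 t := by
  refine ((intervalIntegrable_sub_rpow_mul_rpow hσ hδ ht).mul_continuousOn
    (continuous_mlReal_neg_rpow hβ hδ).continuousOn).congr fun s _ => ?_
  simp only [mlKernel]
  ring

/-- The Riemann–Liouville fractional integral of order `σ` raises the second parameter by `σ`. -/
lemma integral_sub_rpow_mul_mlKernel {β δ σ t : ℝ} (hβ : 0 < β) (hδ : 0 < δ)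
    (hσ : 0 < σ) (ht : 0 < t) :
    ∫ s in (0 : ℝ)..t, (t - s) ^ (σ - 1) * mlKernel β δ s =
      Real.Gamma σ * mlKernel β (δ + σ) t := by
  have hρ : ∀ k : ℕ, 0 < β * k + δ := fun k => by positivity
  have hterm : ∀ k : ℕ, ∫ s in Set.Ioc 0 t, (t - s) ^ (σ - 1) *
      (s ^ (β * k + δ - 1) * (Real.Gamma (β * k + δ))⁻¹) =
      Real.Gamma σ * (t ^ (β * k + (δ + σ) - 1) * (Real.Gamma (β * k + (δ + σ)))⁻¹) := by
    intro k
    have hG := (Real.Gamma_pos_of_pos (hρ k)).ne'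
    simp only [← mul_assoc]
    rw [integral_mul_const, ← intervalIntegral.integral_of_le ht.le,
      integral_sub_rpow_mul_rpow hσ (hρ k) ht, ← add_assoc]
    field_simp
  let F : ℕ → ℝ → ℝ := fun k s => (t - s) ^ (σ - 1) *
    ((-1) ^ k * (s ^ (β * k + δ - 1) * (Real.Gamma (β * k + δ))⁻¹))
  have hFi : ∀ k, Integrable (F k) (volume.restrict (Set.Ioc 0 t)) := by
    intro k
    have h := (intervalIntegrable_sub_rpow_mul_rpow hσ (hρ k) ht).1.mul_const
      ((-1) ^ k * (Real.Gamma (β * k + δ))⁻¹)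
    refine h.congr (Eventually.of_forall fun s => ?_)
    simp only [F]
    ring
  have hFn : ∀ k, ∫ s in Set.Ioc 0 t, ‖F k s‖ =
      Real.Gamma σ * (t ^ (β * k + (δ + σ) - 1) * (Real.Gamma (β * k + (δ + σ)))⁻¹) := by
    intro k
    rw [← hterm k]
    refine setIntegral_congr_fun measurableSet_Ioc fun s hs => ?_
    have h1 : 0 ≤ (t - s) ^ (σ - 1) := Real.rpow_nonneg (by linarith [hs.2]) _
    have h2 : 0 ≤ s ^ (β * k + δ - 1) := Real.rpow_nonneg hs.1.le _
    have h3 := Real.Gamma_pos_of_pos (hρ k)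
    simp only [F]
    rw [norm_mul, norm_mul, norm_pow, norm_neg, norm_one, one_pow, one_mul,
      Real.norm_of_nonneg h1, Real.norm_of_nonneg (by positivity)]
  have hsum : Summable fun k => ∫ s in Set.Ioc 0 t, ‖F k s‖ := by
    simp only [hFn]
    exact (summable_rpow_mul_inv_Gamma hβ (by positivity) ht).mul_left _
  have h := (hasSum_integral_of_summable_integral_norm hFi hsum).tsum_eq
  rw [intervalIntegral.integral_of_le ht.le, mlKernel_eq_tsum ht, ← tsum_mul_left]
  have hl : ∫ s in Set.Ioc 0 t, (t - s) ^ (σ - 1) * mlKernel β δ s =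
      ∫ s in Set.Ioc 0 t, ∑' k, F k s := by
    refine setIntegral_congr_fun measurableSet_Ioc fun s hs => ?_
    simp only [F]
    rw [tsum_mul_left, mlKernel_eq_tsum hs.1]
  rw [hl, ← h]
  refine tsum_congr fun k => ?_
  rw [mul_left_comm, ← hterm k, ← integral_const_mul]
  refine integral_congr_ae (Eventually.of_forall fun s => ?_)
  simp only [F]
  ring

lemma intervalIntegrable_mlKernel {β δ t : ℝ} (hβ : 0 < β) (hδ : 0 < δ) (ht : 0 < t) :
    IntervalIntegrable (mlKernel β δ) volume 0 t := by
  simpa using intervalIntegrable_sub_rpow_mul_mlKernel hβ hδ one_pos ht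

lemma integral_mlKernel {β δ t : ℝ} (hβ : 0 < β) (hδ : 0 < δ) (ht : 0 < t) :
    ∫ s in (0 : ℝ)..t, mlKernel β δ s = mlKernel β (δ + 1) t := by
  simpa using integral_sub_rpow_mul_mlKernel hβ hδ one_pos ht

lemma hasDerivAt_mlKernel {β δ t : ℝ} (hβ : 0 < β) (hδ : 0 < δ) (ht : 0 < t) :
    HasDerivAt (mlKernel β (δ + 1)) (mlKernel β δ t) t := by
  refine (intervalIntegral.integral_hasDerivAt_right (intervalIntegrable_mlKernel hβ hδ ht)
    (stronglyMeasurable_mlKernel hβ hδ).stronglyMeasurableAtFilter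
    (continuousAt_mlKernel hβ hδ ht.ne')).congr_of_eventuallyEq ?_
  filter_upwards [lt_mem_nhds ht] with u hu
  exact (integral_mlKernel hβ hδ hu).symm

lemma mlKernel_nonneg {α t : ℝ} (h0 : 1 / 2 ≤ α) (h1 : α ≤ 1) (ht : 0 < t) :
    0 ≤ mlKernel (2 * α) (3 * α) t := by
  have h := mlReal_sq_add_sq_le h0 h1 ht
  have hp : 0 < t ^ (α - 1) * (Real.Gamma α)⁻¹ := by
    have := Real.Gamma_pos_of_pos (by linarith : 0 < α)
    positivity
  simp only [mlKernel]
  nlinarith [sq_nonneg (t ^ (2 * α - 1) * mlReal (2 * α) (2 * α) (-t ^ (2 * α))),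
    sq_nonneg (t ^ (3 * α - 1) * mlReal (2 * α) (3 * α) (-t ^ (2 * α)))]

lemma mlKernel_eq_zero_of_eq_zero {α t : ℝ} (h0 : 1 / 2 ≤ α) (h1 : α ≤ 1) (ht : 0 < t)
    (h : mlKernel (2 * α) (3 * α) t = 0) : mlKernel (2 * α) (2 * α) t = 0 := by
  have h2 := mlReal_sq_add_sq_le h0 h1 ht
  simp only [mlKernel] at h ⊢
  rw [h] at h2
  exact pow_eq_zero_iff two_ne_zero |>.1 (le_antisymm (by linarith) (sq_nonneg _))

lemma rpow_neg_sub_rpow_neg_le {α x h : ℝ} (hα : 0 ≤ α) (hx : 0 < x) (hh : 0 ≤ h) :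
    (x + h) ^ (-α) - x ^ (-α) ≤ -(α * h * (x + h) ^ (-α - 1)) := by
  have hy : 0 < x + h := by linarith
  have h1 : 1 + α * (h / (x + h)) ≤ (x / (x + h)) ^ (-α) := by
    rw [Real.rpow_def_of_pos (by positivity)]
    have h2 := Real.log_le_sub_one_of_pos (by positivity : 0 < x / (x + h))
    have h3 : x / (x + h) - 1 = -(h / (x + h)) := by
      field_simp
      ring
    have h4 := Real.add_one_le_exp (Real.log (x / (x + h)) * -α)
    nlinarith
  rw [Real.div_rpow hx.le hy.le, le_div_iff₀ (by positivity)] at h1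
  rw [Real.rpow_sub_one hy.ne']
  have h5 : (1 + α * (h / (x + h))) * (x + h) ^ (-α) =
      (x + h) ^ (-α) + α * h * ((x + h) ^ (-α) / (x + h)) := by ring
  linarith

lemma integral_sub_rpow_neg {α t h : ℝ} (hα : α < 1) :
    ∫ s in t..(t + h), (t + h - s) ^ (-α) = h ^ (1 - α) / (1 - α) := by
  rw [intervalIntegral.integral_comp_sub_left (fun s => s ^ (-α)) (t + h), sub_self,
    add_sub_cancel_left, integral_rpow (Or.inl (by linarith)), show -α + 1 = 1 - α by ring,
    Real.zero_rpow (by linarith), sub_zero]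

/-- If the kernel vanished at `t`, its fractional derivative of order `α` would be both zero
and strictly negative there. -/
lemma mlKernel_pos {α t : ℝ} (h0 : 1 / 2 ≤ α) (h1 : α < 1) (ht : 0 < t) :
    0 < mlKernel (2 * α) (3 * α) t := by
  refine (mlKernel_nonneg h0 h1.le ht).lt_of_ne' fun hU => ?_
  have hB := mlKernel_eq_zero_of_eq_zero h0 h1.le ht hU
  have hβ : 0 < 2 * α := by linarith
  have hσ : 0 < 1 - α := by linarith
  set U := mlKernel (2 * α) (3 * α) with hUdef
  have hUc : Continuous U := continuous_mlKernel hβ (by linarith)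
  have hU0 : ∀ s, 0 < s → 0 ≤ U s := fun s hs => mlKernel_nonneg h0 h1.le hs
  set v := mlKernel (2 * α) (2 * α + 1) with hvdef
  have hv : ∀ s, 0 < s → Real.Gamma (1 - α) * v s = ∫ r in (0 : ℝ)..s, (s - r) ^ (-α) * U r := by
    intro s hs
    have := integral_sub_rpow_mul_mlKernel hβ (by linarith : 0 < 3 * α) hσ hs
    rw [show 3 * α + (1 - α) = 2 * α + 1 by ring, show 1 - α - 1 = -α by ring] at this
    exact this.symm
  have hvi : ∀ s, 0 < s → IntervalIntegrable (fun r => (s - r) ^ (-α) * U r) volume 0 s := by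
    intro s hs
    have := intervalIntegrable_sub_rpow_mul_mlKernel hβ (by linarith : 0 < 3 * α) hσ hs
    rwa [show 1 - α - 1 = -α by ring] at this
  have hvd : HasDerivAt v 0 t := hB ▸ hasDerivAt_mlKernel hβ hβ ht
  have hUd : HasDerivAt U (mlKernel (2 * α) (3 * α - 1) t) t := by
    have := hasDerivAt_mlKernel hβ (by linarith : 0 < 3 * α - 1) ht
    rwa [sub_add_cancel] at this
  obtain ⟨C, hC0, hC⟩ := hUd.isBigO_sub.exists_pos
  have hI : 0 < ∫ s in (0 : ℝ)..t, U s := by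
    refine intervalIntegral.integral_pos ht hUc.continuousOn (fun s hs => hU0 s hs.1) ?_
    have h2 := (mlKernel_eventually_pos hβ (by linarith : 0 < 3 * α)).and
      (Ioo_mem_nhdsGT ht)
    obtain ⟨c, hc, hct⟩ := h2.exists
    exact ⟨c, ⟨hct.1.le, hct.2.le⟩, hc⟩
  set I := ∫ s in (0 : ℝ)..t, U s with hIdef
  set κ := α * (t + 1) ^ (-α - 1) * I with hκ
  have hκ0 : 0 < κ := by positivity
  have hkey : ∀ᶠ h in 𝓝[>] (0 : ℝ),
      Real.Gamma (1 - α) * (h⁻¹ • (v (t + h) - v t)) ≤ -κ + C * (h ^ (1 - α) / (1 - α)) := by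
    obtain ⟨ε, hε, hball⟩ := Metric.eventually_nhds_iff.1 hC.bound
    filter_upwards [Ioo_mem_nhdsGT (lt_min hε one_pos)] with h hh
    have hh0 : 0 < h := hh.1
    have hhε : h < ε := hh.2.trans_le (min_le_left _ _)
    have hh1 : h < 1 := hh.2.trans_le (min_le_right _ _)
    have hUle : ∀ s ∈ Set.Icc t (t + h), U s ≤ C * h := by
      intro s hs
      have hst : |s - t| ≤ h := abs_le.2 ⟨by linarith [hs.1], by linarith [hs.2]⟩
      have h3 := hball (y := s) (by rw [Real.dist_eq]; linarith)
      rw [hU, sub_zero, Real.norm_eq_abs, Real.norm_eq_abs] at h3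
      exact (le_abs_self _).trans (h3.trans (by gcongr))
    have hi := hvi (t + h) (by linarith)
    have hi1 : IntervalIntegrable (fun r => (t + h - r) ^ (-α) * U r) volume 0 t :=
      hi.mono_set (by
        rw [Set.uIcc_of_le ht.le, Set.uIcc_of_le (by linarith)]
        exact Set.Icc_subset_Icc_right (by linarith))
    have hi2 : IntervalIntegrable (fun r => (t + h - r) ^ (-α) * U r) volume t (t + h) :=
      hi.mono_set (by
        rw [Set.uIcc_of_le (by linarith), Set.uIcc_of_le (by linarith)]
        exact Set.Icc_subset_Icc_left ht.le)
    have hi3 : IntervalIntegrable (fun r => (t + h - r) ^ (-α) * (C * h)) volume t (t + h) := by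
      have := (intervalIntegral.intervalIntegrable_rpow' (a := h) (b := 0)
        (by linarith : -1 < -α)).comp_sub_left (t + h)
      rw [add_sub_cancel_right, sub_zero] at this
      exact this.mul_const _
    have hA : (∫ r in (0 : ℝ)..t, (t + h - r) ^ (-α) * U r) -
        ∫ r in (0 : ℝ)..t, (t - r) ^ (-α) * U r ≤ -(κ * h) := by
      rw [← intervalIntegral.integral_sub hi1 (hvi t ht)]
      have e : -(κ * h) = ∫ r in (0 : ℝ)..t, -(α * h * (t + 1) ^ (-α - 1)) * U r := by
        rw [intervalIntegral.integral_const_mul, hκ]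
        ring
      rw [e]
      refine intervalIntegral.integral_mono_on_of_le_Ioo ht.le (hi1.sub (hvi t ht))
        ((hUc.const_mul _).intervalIntegrable _ _) fun r hr => ?_
      rw [← sub_mul]
      refine mul_le_mul_of_nonneg_right ?_ (hU0 r hr.1)
      have h4 := rpow_neg_sub_rpow_neg_le (by linarith : 0 ≤ α) (sub_pos.2 hr.2) hh0.le
      rw [show t - r + h = t + h - r by ring] at h4
      refine h4.trans (neg_le_neg ?_)
      have h5 : (t + 1) ^ (-α - 1) ≤ (t + h - r) ^ (-α - 1) :=
        Real.rpow_le_rpow_of_nonpos (by linarith [hr.2]) (by linarith [hr.1]) (by linarith)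
      gcongr
    have hD : ∫ r in t..(t + h), (t + h - r) ^ (-α) * U r ≤
        h ^ (1 - α) / (1 - α) * (C * h) := by
      rw [← integral_sub_rpow_neg h1 (t := t), ← intervalIntegral.integral_mul_const]
      refine intervalIntegral.integral_mono_on (by linarith) hi2 hi3 fun r hr => ?_
      exact mul_le_mul_of_nonneg_left (hUle r hr) (Real.rpow_nonneg (by linarith [hr.2]) _)
    have hsum := intervalIntegral.integral_add_adjacent_intervals hi1 hi2
    have hfin : Real.Gamma (1 - α) * (v (t + h) - v t) ≤
        (-κ + C * (h ^ (1 - α) / (1 - α))) * h := by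
      rw [mul_sub, hv _ (by linarith), hv t ht, ← hsum]
      linarith
    rw [smul_eq_mul, mul_left_comm, inv_mul_le_iff₀ hh0, mul_comm h]
    exact hfin
  have hl : Tendsto (fun h : ℝ => Real.Gamma (1 - α) * (h⁻¹ • (v (t + h) - v t))) (𝓝[>] 0)
      (𝓝 (Real.Gamma (1 - α) * 0)) :=
    ((hasDerivAt_iff_tendsto_slope_zero.1 hvd).mono_left
      (nhdsWithin_mono _ fun x hx => ne_of_gt hx)).const_mul _
  have hr : Tendsto (fun h : ℝ => -κ + C * (h ^ (1 - α) / (1 - α))) (𝓝[>] 0)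
      (𝓝 (-κ + C * ((0 : ℝ) ^ (1 - α) / (1 - α)))) :=
    ((((Real.continuous_rpow_const hσ.le).tendsto 0).div_const _).const_mul C |>.const_add
      (-κ)).mono_left nhdsWithin_le_nhds
  have := le_of_tendsto_of_tendsto hl hr hkey
  rw [Real.zero_rpow hσ.ne'] at this
  simp at this
  linarith

lemma mlKernel_two_pos {β t : ℝ} (hβ : 1 < β) (hβ' : β ≤ 4 / 3) (ht : 0 < t) :
    0 < mlKernel β 2 t := by
  have hpos : ∀ s, 0 < s → 0 < mlKernel β (3 * (β / 2)) s := fun s hs => by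
    have := mlKernel_pos (α := β / 2) (by linarith) (by linarith) hs
    rwa [mul_div_cancel₀ β two_ne_zero] at this
  rcases hβ'.eq_or_lt with rfl | hlt
  · convert hpos t ht using 2
    norm_num
  · have hσ : 0 < 2 - 3 * (β / 2) := by linarith
    have hδ : 0 < 3 * (β / 2) := by linarith
    have h := integral_sub_rpow_mul_mlKernel (by linarith : 0 < β) hδ hσ ht
    have hI := intervalIntegral.intervalIntegral_pos_of_pos_on
      (intervalIntegrable_sub_rpow_mul_mlKernel (by linarith : 0 < β) hδ hσ ht)
      (fun s hs => mul_pos (Real.rpow_pos_of_pos (sub_pos.2 hs.2) _) (hpos s hs.1)) ht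
    rw [h, add_sub_cancel] at hI
    exact (mul_pos_iff_of_pos_left (Real.Gamma_pos_of_pos hσ)).1 hI

/-- If `1 < β ≤ 4/3`, then `E_{β,2}(−z) > 0` for every `z > 0`; in particular
`z ↦ E_{β,2}(−z)` has no zeros on `(0,∞)`. -/
theorem mlReal_beta2_pos (β : ℝ) (hβ : 1 < β) (hβ' : β ≤ 4 / 3) :
    (∀ z : ℝ, 0 < z → 0 < mlReal β 2 (-z))
      ∧ ∀ z : ℝ, 0 < z → mlReal β 2 (-z) ≠ 0 := by
  have h : ∀ z : ℝ, 0 < z → 0 < mlReal β 2 (-z) := by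
    intro z hz
    have ht : 0 < z ^ (1 / β) := by positivity
    have h := mlKernel_two_pos hβ hβ' ht
    have e : (z ^ (1 / β)) ^ β = z := by
      rw [← Real.rpow_mul hz.le, one_div_mul_cancel (by linarith), Real.rpow_one]
    rw [mlKernel, e] at h
    exact (mul_pos_iff_of_pos_left (by positivity)).1 h
  exact ⟨h, fun z hz => (h z hz).ne'⟩
end
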